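/- arXiv:1401.6843 — 2 statements merged into one kernel-verified Lean document; each statement's English description precedes it below -/
import Mathlib

section
/- For every 1 ≤ i ≤ n²/2 and j ∈ {0,1}, the 2n² elements E^lα_{2i,j} and E^lγ_{2i,j} (0 ≤ l ≤ n²−1) are linearly independent over k. -/
noncomputable section

open scoped TensorProduct

namespace QFL

/-- The defining relations of the quasi-Frobenius-Lusztig kernel `ũ_q(sl₂)`,
on the free algebra on four generators `K = ι 0`, `K̂ = ι 1`, `E = ι 2`, `F = ι 3`. -/
inductive Rel (k : Type) [Field k] (n : ℕ) (q : k) :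
    FreeAlgebra k (Fin 4) → FreeAlgebra k (Fin 4) → Prop
  | Kord : Rel k n q (FreeAlgebra.ι k (0 : Fin 4) ^ n) 1
  | Khord : Rel k n q (FreeAlgebra.ι k (1 : Fin 4) ^ n)
      ((FreeAlgebra.ι k (0 : Fin 4) ^ (n - 1)) ^ 2)
  | KKh : Rel k n q (FreeAlgebra.ι k (0 : Fin 4) * FreeAlgebra.ι k (1 : Fin 4))
      (FreeAlgebra.ι k (1 : Fin 4) * FreeAlgebra.ι k (0 : Fin 4))
  | KE : Rel k n q
      (FreeAlgebra.ι k (0 : Fin 4) * FreeAlgebra.ι k (2 : Fin 4) *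
        FreeAlgebra.ι k (0 : Fin 4) ^ (n - 1))
      (q ^ n • FreeAlgebra.ι k (2 : Fin 4))
  | KF : Rel k n q
      (FreeAlgebra.ι k (0 : Fin 4) * FreeAlgebra.ι k (3 : Fin 4) *
        FreeAlgebra.ι k (0 : Fin 4) ^ (n - 1))
      ((q ^ n)⁻¹ • FreeAlgebra.ι k (3 : Fin 4))
  | KhE : Rel k n q
      (FreeAlgebra.ι k (1 : Fin 4) * FreeAlgebra.ι k (2 : Fin 4) *
        FreeAlgebra.ι k (1 : Fin 4) ^ (n ^ 2 - 1))
      ((q ^ n * (q ^ 2)⁻¹) • FreeAlgebra.ι k (2 : Fin 4))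
  | KhF : Rel k n q
      (FreeAlgebra.ι k (1 : Fin 4) * FreeAlgebra.ι k (3 : Fin 4) *
        FreeAlgebra.ι k (1 : Fin 4) ^ (n ^ 2 - 1))
      (((q ^ n)⁻¹ * q ^ 2) • FreeAlgebra.ι k (3 : Fin 4))
  | Enil : Rel k n q (FreeAlgebra.ι k (2 : Fin 4) ^ n ^ 2) 0
  | Fnil : Rel k n q (FreeAlgebra.ι k (3 : Fin 4) ^ n ^ 2) 0
  | EF : Rel k n q
      (FreeAlgebra.ι k (3 : Fin 4) * FreeAlgebra.ι k (2 : Fin 4) -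
        q⁻¹ • (FreeAlgebra.ι k (2 : Fin 4) * FreeAlgebra.ι k (3 : Fin 4)))
      (1 - FreeAlgebra.ι k (0 : Fin 4) ^ (n - 1) * FreeAlgebra.ι k (1 : Fin 4))

/-- The algebra `ũ_q(sl₂)` as the quotient of the free algebra by the defining relations. -/
abbrev U (k : Type) [Field k] (n : ℕ) (q : k) := RingQuot (Rel k n q)

variable (k : Type) [Field k] (n : ℕ) (q : k)

def K : U k n q := RingQuot.mkAlgHom k (Rel k n q) (FreeAlgebra.ι k (0 : Fin 4))
def Kh : U k n q := RingQuot.mkAlgHom k (Rel k n q) (FreeAlgebra.ι k (1 : Fin 4))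
def E : U k n q := RingQuot.mkAlgHom k (Rel k n q) (FreeAlgebra.ι k (2 : Fin 4))
def F : U k n q := RingQuot.mkAlgHom k (Rel k n q) (FreeAlgebra.ι k (3 : Fin 4))

/-- `K⁻¹ = K^(n-1)`. -/
def Kinv : U k n q := K k n q ^ (n - 1)
/-- `K̂⁻¹ = K̂^(n²-1)`. -/
def Khinv : U k n q := Kh k n q ^ (n ^ 2 - 1)

/-- `φ_{2i} = (2/n²) Σ_{t<n²/2} q^{-2it} (K⁻¹K̂)^t`. -/
def phi (i : ℕ) : U k n q :=
  ((n ^ 2 : k)⁻¹ * 2) • ∑ t ∈ Finset.range (n ^ 2 / 2),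
    (q⁻¹ ^ (2 * i * t)) • (Kinv k n q * Kh k n q) ^ t

/-- `𝟙₀ = (1/2)(1 + KK̂^(n/2))` and `𝟙₁ = (1/2)(1 - KK̂^(n/2))`. -/
def oneJ (j : ℕ) : U k n q :=
  if j = 0 then (2 : k)⁻¹ • (1 + K k n q * Kh k n q ^ (n / 2))
  else (2 : k)⁻¹ • (1 - K k n q * Kh k n q ^ (n / 2))

/-- The idempotent `e_{2i,j} = φ_{2i} 𝟙_j`. -/
def eIdem (i j : ℕ) : U k n q := phi k n q i * oneJ k n q j

/-- `α_{2i,j} = F^(n²-1) e_{2i,j}`. -/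
def alpha (i j : ℕ) : U k n q := F k n q ^ (n ^ 2 - 1) * eIdem k n q i j

/-- `β_{2i,j} = E^(2i-2) α_{2i,j}`. -/
def beta (i j : ℕ) : U k n q := E k n q ^ (2 * i - 2) * alpha k n q i j

/-- The Gaussian number `s_q = 1 + q + ⋯ + q^(s-1)`. -/
def gauss (x : k) (s : ℕ) : k := ∑ t ∈ Finset.range s, x ^ t

/-- The span of the PBW-type monomials `F^a K^c K̂^d E^b` with `a ≤ n²-2`, `b ≤ n²-1`,
`c ≤ n-1`, `d ≤ n²-1`. -/
def pbw : Submodule k (U k n q) :=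
  Submodule.span k {x | ∃ a b c d : ℕ, a ≤ n ^ 2 - 2 ∧ b ≤ n ^ 2 - 1 ∧ c ≤ n - 1 ∧
    d ≤ n ^ 2 - 1 ∧ x = F k n q ^ a * K k n q ^ c * Kh k n q ^ d * E k n q ^ b}

/-- `γ_{2i,j}`: the unique element of the PBW span with `F·γ = β_{2i,j}`. -/
def gam (i j : ℕ) : U k n q :=
  @dite _ (∃! x, x ∈ pbw k n q ∧ F k n q * x = beta k n q i j)
    (Classical.propDecidable _) (fun h => h.choose) (fun _ => 0)

/-- The left ideal `P_{2i,j} = u·γ_{2i,j}`. -/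
def P (i j : ℕ) : Submodule (U k n q) (U k n q) :=
  Submodule.span (U k n q) {gam k n q i j}

/-- `S_{2i,j} = Soc(P_{2i,j})`, the sum of all simple submodules of `P_{2i,j}`. -/
def S (i j : ℕ) : Submodule (U k n q) (U k n q) :=
  sSup {N : Submodule (U k n q) (U k n q) | N ≤ P k n q i j ∧ IsSimpleModule (U k n q) N}

end QFL

/-!
Multiplication by `E` is nilpotent, and `l ↦ E ^ l * α`, `l ↦ E ^ l * γ` are two of its chains, so
everything reduces to the independence of the last vectors `E ^ (n² - 1) * α` and
`E ^ (n² - 1) * γ`. Both are eigenvectors of multiplication by `K⁻¹K̂`, with eigenvalues whose ratio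
is `q ^ (4i - 2)`; this is not `1` because `4 ∣ n²`. Hence it suffices that both are nonzero.

For `α` this is seen in the module induced from a suitable character of the torus `⟨K, K̂⟩`. For `γ`
one uses `F * E ^ (r + 1) * γ = c • E ^ (r + 2i - 1) * α + d • E ^ r * γ`, where `c ≠ 0` and, for
`r < n² - 1`, `d = 0` only if `n² ∣ r + 2i`: if `E ^ (n² - 1) * γ = 0`, descending in `r` gives
`E ^ r * γ = 0` down to `r = n² - 2i + 1`, and one further step, where `d = 0`, gives
`E ^ (n² - 1) * α = 0`.

That `γ` exists, is unique and is an eigenvector rests on the PBW basis: inducing instead from the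
torus itself exhibits the algebra as spanned by the `F ^ a * E ^ b` over the torus, with left
multiplication by `F` having its kernel in degree `a = n² - 1`.
-/

namespace QFL

section QCommute

variable {R B : Type*} [CommSemiring R] [Semiring B] [Algebra R B] {c d : R} {X X' Y Z : B}

/-- `X` and `Y` commute up to the scalar `c`, that is `XY = c • YX`. -/
def QCommute (c : R) (X Y : B) : Prop := X * Y = c • (Y * X)

namespace QCommute

theorem eq (h : QCommute c X Y) : X * Y = c • (Y * X) := h

theorem one_left (Y : B) : QCommute (1 : R) 1 Y := by simp [QCommute]

theorem one_right (X : B) : QCommute (1 : R) X 1 := by simp [QCommute]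

theorem mul_left (hX : QCommute c X Z) (hY : QCommute d Y Z) : QCommute (c * d) (X * Y) Z := by
  rw [QCommute] at *
  rw [mul_assoc, hY, mul_smul_comm, ← mul_assoc, hX, smul_mul_assoc, smul_smul, mul_assoc,
    mul_comm]

theorem mul_right (hY : QCommute c X Y) (hZ : QCommute d X Z) : QCommute (c * d) X (Y * Z) := by
  rw [QCommute] at *
  rw [← mul_assoc, hY, smul_mul_assoc, mul_assoc, hZ, mul_smul_comm, smul_smul, mul_assoc]

theorem pow_left (h : QCommute c X Y) (m : ℕ) : QCommute (c ^ m) (X ^ m) Y := by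
  induction m with
  | zero => simpa using one_left Y
  | succ m ih => simpa only [pow_succ] using ih.mul_left h

theorem pow_right (h : QCommute c X Y) (m : ℕ) : QCommute (c ^ m) X (Y ^ m) := by
  induction m with
  | zero => simpa using one_right X
  | succ m ih => simpa only [pow_succ] using ih.mul_right h

theorem symm (h : QCommute c X Y) (hdc : d * c = 1) : QCommute d Y X := by
  rw [QCommute] at *
  rw [h, smul_smul, hdc, one_smul]

theorem conj (h : QCommute c X Y) (hX : X * X' = 1) : X * Y * X' = c • Y := by
  rw [QCommute] at h
  rw [h, smul_mul_assoc, mul_assoc, hX, mul_one]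

theorem of_conj (h : X * Y * X' = c • Y) (hX : X' * X = 1) : QCommute c X Y := by
  rw [QCommute, ← smul_mul_assoc, ← h, mul_assoc _ X', hX, mul_one]

end QCommute

theorem mul_pow_succ_of_mul_eq {s t : R} (hXY : X * Y = c • (Y * X) + (s • 1 + t • Z))
    (hZY : QCommute (c ^ 2) Z Y) (r : ℕ) :
    X * Y ^ (r + 1) = c ^ (r + 1) • (Y ^ (r + 1) * X) +
      (∑ i ∈ Finset.range (r + 1), c ^ i) • (s • Y ^ r + (t * c ^ r) • (Y ^ r * Z)) := by
  induction r with
  | zero => simp [hXY]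
  | succ r ih =>
    have hYXY : Y ^ (r + 1) * X * Y =
        c • (Y ^ (r + 2) * X) + (s • Y ^ (r + 1) + t • (Y ^ (r + 1) * Z)) := by
      rw [mul_assoc, hXY]
      simp only [mul_add, mul_smul_comm, mul_one, pow_succ, mul_assoc]
    have hYZY : Y ^ r * Z * Y = c ^ 2 • (Y ^ (r + 1) * Z) := by
      rw [mul_assoc, hZY, mul_smul_comm, ← mul_assoc, ← pow_succ]
    have hgeom : ∑ i ∈ Finset.range (r + 2), c ^ i =
        c * ∑ i ∈ Finset.range (r + 1), c ^ i + 1 := by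
      rw [Finset.sum_range_succ' _ (r + 1), Finset.mul_sum]
      simp only [pow_succ', pow_zero]
    have hgeom' : c * ∑ i ∈ Finset.range (r + 1), c ^ i + 1 =
        ∑ i ∈ Finset.range (r + 1), c ^ i + c ^ (r + 1) := by
      rw [← hgeom, Finset.sum_range_succ]
    rw [pow_succ Y (r + 1), ← mul_assoc, ih, add_mul, smul_mul_assoc, smul_mul_assoc, hYXY,
      add_mul, smul_mul_assoc, smul_mul_assoc, hYZY, ← pow_succ, ← pow_succ]
    match_scalars
    · ring
    · rw [hgeom, hgeom']; ring
    · rw [hgeom]; ring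

end QCommute

section PowChain

variable {R M : Type*} [Ring R] [AddCommGroup M] [Module R M]

theorem linearIndependent_pow_apply {ι : Type*} [Finite ι] {N : ℕ} (T : Module.End R M)
    (v : ι → M) (hN : ∀ i, (T ^ N) (v i) = 0)
    (hv : LinearIndependent R fun i => (T ^ (N - 1)) (v i)) :
    LinearIndependent R fun p : ι × Fin N => (T ^ (p.2 : ℕ)) (v p.1) := by
  cases nonempty_fintype ι
  rw [Fintype.linearIndependent_iff] at hv ⊢
  intro c hc
  have hpow : ∀ i l, N ≤ l → (T ^ l) (v i) = 0 := fun i l hl => by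
    rw [← Nat.sub_add_cancel hl, pow_add, Module.End.mul_apply, hN, map_zero]
  suffices ∀ m, ∀ hm : m < N, ∀ i, c (i, ⟨m, hm⟩) = 0 from fun p => this p.2 p.2.2 p.1
  intro m
  induction m using Nat.strong_induction_on with
  | _ m ih =>
    intro hm
    refine hv _ ?_
    -- apply `T ^ (N - 1 - m)`: the terms with exponent above `m` die, those below vanish by `ih`
    have happly := congrArg (T ^ (N - 1 - m)) hc
    rw [Fintype.sum_prod_type, map_sum, map_zero] at happly
    rw [← happly]
    refine Finset.sum_congr rfl fun i _ => ?_
    rw [map_sum, Finset.sum_eq_single ⟨m, hm⟩]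
    · rw [map_smul, ← Module.End.mul_apply, ← pow_add, Nat.sub_add_cancel (by omega)]
    · intro l _ hl
      rcases lt_or_gt_of_ne (Fin.val_ne_of_ne hl) with hlt | hgt
      · rw [ih l hlt l.2, zero_smul, map_zero]
      · have hml : m < l := hgt
        rw [map_smul, ← Module.End.mul_apply, ← pow_add, hpow _ _ (by simp only; omega), smul_zero]
    · simp

end PowChain

/-- The free `A`-module with basis `vec a b` for `a, b < N`, where `vec a b` stands for the
monomial `F ^ a * E ^ b` applied to a generator. -/
abbrev PBWModule (N : ℕ) (A : Type*) [CommRing A] := Fin N × Fin N →₀ A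

namespace PBWModule

variable {N : ℕ} {A : Type*} [CommRing A]

/-- The basis vector with index `(a, b)`, extended by zero to all pairs of natural numbers. -/
def vec (N : ℕ) (A : Type*) [CommRing A] (a b : ℕ) : PBWModule N A :=
  if h : a < N ∧ b < N then Finsupp.single (⟨a, h.1⟩, ⟨b, h.2⟩) 1 else 0

theorem vec_val (p : Fin N × Fin N) : vec N A p.1 p.2 = Finsupp.single p 1 := by
  simp [vec]

theorem vec_eq_zero {a b : ℕ} (h : N ≤ a ∨ N ≤ b) : vec N A a b = 0 :=
  dif_neg (by omega)

theorem hom_ext {M : Type*} [AddCommMonoid M] [Module A M] {f g : PBWModule N A →ₗ[A] M}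
    (h : ∀ a b, a < N → b < N → f (vec N A a b) = g (vec N A a b)) : f = g := by
  refine Finsupp.lhom_ext' fun p => LinearMap.ext_ring ?_
  simpa [← vec_val] using h p.1 p.2 p.1.2 p.2.2

theorem induction {motive : PBWModule N A → Prop} (zero : motive 0)
    (add : ∀ f g, motive f → motive g → motive (f + g))
    (smul_vec : ∀ (t : A) a b, a < N → b < N → motive (t • vec N A a b)) (f : PBWModule N A) :
    motive f := by
  induction f using Finsupp.induction_linear with
  | zero => exact zero
  | add f g hf hg => exact add f g hf hg
  | single p t => simpa [vec_val] using smul_vec t p.1 p.2 p.1.2 p.2.2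

/-- The coefficient of `vec a b`, extended by zero to all pairs of natural numbers. -/
def coord (N : ℕ) (A : Type*) [CommRing A] (a b : ℕ) : PBWModule N A →ₗ[A] A :=
  if h : a < N ∧ b < N then Finsupp.lapply (⟨a, h.1⟩, ⟨b, h.2⟩) else 0

theorem coord_vec {a b : ℕ} (ha : a < N) (hb : b < N) (a' b' : ℕ) :
    coord N A a b (vec N A a' b') = if a' = a ∧ b' = b then 1 else 0 := by
  rw [coord, dif_pos ⟨ha, hb⟩, Finsupp.lapply_apply, vec]
  split_ifs with h h' h'
  · simp [h']
  · simpa using Finsupp.single_eq_of_ne (by simpa [eq_comm] using h')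
  · omega
  · rfl

theorem eq_zero_of_coord_eq_zero {f : PBWModule N A}
    (h : ∀ a b, a < N → b < N → coord N A a b f = 0) : f = 0 :=
  Finsupp.ext fun p => by simpa [coord] using h p.1 p.2 p.1.2 p.2.2

/-- The endomorphism sending each basis vector `vec a b` to `φ a b`. -/
def ofVec (φ : ℕ → ℕ → PBWModule N A) : Module.End A (PBWModule N A) :=
  Finsupp.linearCombination A fun p => φ p.1 p.2

theorem ofVec_vec {φ : ℕ → ℕ → PBWModule N A} {a b : ℕ}
    (hφ : N ≤ a ∨ N ≤ b → φ a b = 0) : ofVec φ (vec N A a b) = φ a b := by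
  by_cases h : a < N ∧ b < N
  · simp [vec, h, ofVec]
  · have h' : N ≤ a ∨ N ≤ b := by omega
    rw [vec_eq_zero h', map_zero, hφ h']

/-- The action of `F`. -/
def actF (N : ℕ) (A : Type*) [CommRing A] : Module.End A (PBWModule N A) :=
  ofVec fun a b => vec N A (a + 1) b

/-- The action of a torus element which has value `z` on the generator and commutes with `E` and
`F` up to the scalars `s` and `t`. -/
def actTorus (N : ℕ) (s t z : A) : Module.End A (PBWModule N A) :=
  ofVec fun a b => (s ^ b * t ^ a * z) • vec N A a b

/-- The coefficient of `F ^ (a - 1) * E ^ b` in `E * F ^ a * E ^ b`, where `p` is the inverse of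
`q` and `z` is the value of `K⁻¹K̂` on the generator. -/
def coeffE (q p z : A) (a b : ℕ) : A :=
  (∑ i ∈ Finset.range a, q ^ i) * (q ^ a * p ^ (2 * b) * z - q)

/-- The action of `E`, with the parameters of `coeffE`. -/
def actE (N : ℕ) (q p z : A) : Module.End A (PBWModule N A) :=
  ofVec fun a b => q ^ a • vec N A a (b + 1) + coeffE q p z a b • vec N A (a - 1) b

theorem actF_vec (a b : ℕ) : actF N A (vec N A a b) = vec N A (a + 1) b :=
  ofVec_vec fun h => vec_eq_zero (by omega)

theorem actTorus_vec (s t z : A) (a b : ℕ) :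
    actTorus N s t z (vec N A a b) = (s ^ b * t ^ a * z) • vec N A a b :=
  ofVec_vec fun h => by rw [vec_eq_zero h, smul_zero]

theorem coeffE_sub (q p z : A) (hqp : q * p = 1) (a b : ℕ) :
    coeffE q p z a b - p * coeffE q p z (a + 1) b = 1 - (p ^ 2) ^ b * (q ^ 2) ^ a * z := by
  have hgeom := geom_sum_succ (x := q) (n := a)
  rw [Finset.sum_range_succ] at hgeom
  simp only [coeffE, Finset.sum_range_succ]
  linear_combination
    (∑ i ∈ Finset.range a, q ^ i + q ^ a - (∑ i ∈ Finset.range a, q ^ i) * q ^ a * p ^ (2 * b) * z -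
      q ^ (2 * a) * p ^ (2 * b) * z) * hqp + hgeom

theorem actTorus_mul (s t z s' t' z' : A) :
    actTorus N s t z * actTorus N s' t' z' = actTorus N (s * s') (t * t') (z * z') := by
  refine hom_ext fun a b _ _ => ?_
  simp only [Module.End.mul_apply, actTorus_vec, map_smul, smul_smul]
  congr 1
  ring

theorem actTorus_one : actTorus N (1 : A) 1 1 = 1 :=
  hom_ext fun a b _ _ => by simp [actTorus_vec]

theorem actTorus_pow (s t z : A) (m : ℕ) :
    actTorus N s t z ^ m = actTorus N (s ^ m) (t ^ m) (z ^ m) := by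
  induction m with
  | zero => simp [actTorus_one]
  | succ m ih => rw [pow_succ, ih, actTorus_mul, pow_succ, pow_succ, pow_succ]

theorem qcommute_actTorus_actF (s t z : A) : QCommute t (actTorus N s t z) (actF N A) := by
  refine hom_ext fun a b _ _ => ?_
  simp only [LinearMap.smul_apply, Module.End.mul_apply, actF_vec, actTorus_vec, map_smul,
    smul_smul]
  congr 1
  ring

theorem actF_pow_vec (m a b : ℕ) : (actF N A ^ m) (vec N A a b) = vec N A (a + m) b := by
  induction m with
  | zero => rfl
  | succ m ih => rw [pow_succ', Module.End.mul_apply, ih, actF_vec, add_assoc]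

theorem actF_pow_eq_zero : actF N A ^ N = 0 :=
  hom_ext fun a b _ _ => by
    rw [actF_pow_vec, vec_eq_zero (by omega), LinearMap.zero_apply]

theorem coord_actTorus {a b : ℕ} (ha : a < N) (hb : b < N) (s t z : A) (f : PBWModule N A) :
    coord N A a b (actTorus N s t z f) = s ^ b * t ^ a * z * coord N A a b f := by
  suffices coord N A a b ∘ₗ actTorus N s t z = (s ^ b * t ^ a * z) • coord N A a b from
    LinearMap.congr_fun this f
  refine hom_ext fun a' b' _ _ => ?_
  simp only [LinearMap.comp_apply, LinearMap.smul_apply, actTorus_vec, map_smul,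
    coord_vec ha hb, smul_eq_mul, mul_ite, mul_one, mul_zero]
  grind

theorem coord_actF {a b : ℕ} (ha : a + 1 < N) (hb : b < N) (f : PBWModule N A) :
    coord N A (a + 1) b (actF N A f) = coord N A a b f := by
  suffices coord N A (a + 1) b ∘ₗ actF N A = coord N A a b from LinearMap.congr_fun this f
  refine hom_ext fun a' b' _ _ => ?_
  simp only [LinearMap.comp_apply, actF_vec, coord_vec ha hb, coord_vec (Nat.lt_of_succ_lt ha) hb,
    Nat.add_right_cancel_iff]

section ActE

variable {q p : A}

theorem actE_vec (hN : ∑ i ∈ Finset.range N, q ^ i = 0) (z : A) {a b : ℕ} (ha : a ≤ N) :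
    actE N q p z (vec N A a b) =
      q ^ a • vec N A a (b + 1) + coeffE q p z a b • vec N A (a - 1) b := by
  refine ofVec_vec fun h => ?_
  rcases h with h | h
  · obtain rfl : a = N := le_antisymm ha h
    rw [vec_eq_zero (Or.inl h), coeffE, hN, zero_mul, zero_smul, smul_zero, add_zero]
  · rw [vec_eq_zero (by omega), vec_eq_zero (by omega), smul_zero, smul_zero, add_zero]

theorem actE_vec_zero (hN : ∑ i ∈ Finset.range N, q ^ i = 0) (z : A) (b : ℕ) :
    actE N q p z (vec N A 0 b) = vec N A 0 (b + 1) := by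
  simp [actE_vec hN, coeffE]

theorem actE_pow_vec_zero (hN : ∑ i ∈ Finset.range N, q ^ i = 0) (z : A) (m b : ℕ) :
    (actE N q p z ^ m) (vec N A 0 b) = vec N A 0 (b + m) := by
  induction m with
  | zero => rfl
  | succ m ih => rw [pow_succ', Module.End.mul_apply, ih, actE_vec_zero hN, add_assoc]

theorem coord_top_actE (hN : ∑ i ∈ Finset.range N, q ^ i = 0) (z : A) {b : ℕ} (hb : b + 1 < N)
    (f : PBWModule N A) :
    coord N A (N - 1) (b + 1) (actE N q p z f) = q ^ (N - 1) * coord N A (N - 1) b f := by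
  suffices coord N A (N - 1) (b + 1) ∘ₗ actE N q p z = q ^ (N - 1) • coord N A (N - 1) b from
    LinearMap.congr_fun this f
  refine hom_ext fun a' b' ha' _ => ?_
  have hNpos : N - 1 < N := by omega
  have hlow : ¬(a' - 1 = N - 1 ∧ b' = b + 1) := by omega
  simp only [LinearMap.comp_apply, LinearMap.smul_apply, actE_vec hN z ha'.le, map_add, map_smul,
    coord_vec hNpos hb, coord_vec hNpos (Nat.lt_of_succ_lt hb), if_neg hlow,
    Nat.add_right_cancel_iff, smul_eq_mul, mul_zero, add_zero]
  grind

theorem coord_top_actE_pow (hN : ∑ i ∈ Finset.range N, q ^ i = 0) (z : A) {b : ℕ} (hb : b < N)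
    (f : PBWModule N A) :
    coord N A (N - 1) b ((actE N q p z ^ b) f) = (q ^ (N - 1)) ^ b * coord N A (N - 1) 0 f := by
  induction b with
  | zero => simp
  | succ b ih =>
    rw [pow_succ', Module.End.mul_apply, coord_top_actE hN z hb, ih (by omega), pow_succ',
      mul_assoc]

theorem qcommute_actTorus_actE (hN : ∑ i ∈ Finset.range N, q ^ i = 0) {s t : A} (hst : s * t = 1)
    (w z : A) : QCommute s (actTorus N s t w) (actE N q p z) := by
  refine hom_ext fun a b ha _ => ?_
  simp only [LinearMap.smul_apply, Module.End.mul_apply, actTorus_vec, actE_vec hN z ha.le,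
    map_smul, map_add, smul_add]
  obtain _ | a := a
  · simp only [coeffE, Finset.range_zero, Finset.sum_empty, zero_mul, zero_smul, smul_zero]
    match_scalars; ring
  · rw [Nat.add_sub_cancel]
    match_scalars
    · ring
    · linear_combination (-s ^ b * t ^ a * w * coeffE q p z (a + 1) b) * hst

theorem actF_mul_actE (hqp : q * p = 1) (hN : ∑ i ∈ Finset.range N, q ^ i = 0) (z : A) :
    actF N A * actE N q p z =
      p • (actE N q p z * actF N A) + (1 - actTorus N (p ^ 2) (q ^ 2) z) := by
  refine hom_ext fun a b ha _ => ?_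
  have hFvec : coeffE q p z a b • vec N A (a - 1 + 1) b = coeffE q p z a b • vec N A a b := by
    cases a <;> simp [coeffE]
  simp only [LinearMap.add_apply, LinearMap.sub_apply, LinearMap.smul_apply, Module.End.mul_apply,
    Module.End.one_apply, actTorus_vec, actF_vec, actE_vec hN z ha.le,
    actE_vec hN z (show a + 1 ≤ N from ha), map_add, map_smul, Nat.add_sub_cancel, hFvec]
  match_scalars
  · linear_combination (-q ^ a) * hqp
  · linear_combination coeffE_sub q p z hqp a b

theorem actE_pow_eq_zero (hqp : q * p = 1) (hN : ∑ i ∈ Finset.range N, q ^ i = 0)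
    (hN' : ∑ i ∈ Finset.range N, p ^ i = 0) (hpN : p ^ N = 1) (z : A) : actE N q p z ^ N = 0 := by
  obtain _ | M := N
  · exact Subsingleton.elim _ _
  have hFE : Commute (actF (M + 1) A) (actE (M + 1) q p z ^ (M + 1)) := by
    have hZ := (qcommute_actTorus_actE hN (p := p) (s := p ^ 2) (t := q ^ 2)
      (by linear_combination (q * p + 1) * hqp) z z)
    have h := mul_pow_succ_of_mul_eq (s := 1) (t := -1) (X := actF (M + 1) A)
      (by rw [actF_mul_actE hqp hN z]; module) hZ M
    rwa [hN', zero_smul, add_zero, hpN, one_smul] at h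
  refine hom_ext fun a b _ _ => ?_
  have hvec : vec (M + 1) A a b = (actF (M + 1) A ^ a) (vec (M + 1) A 0 b) := by
    rw [actF_pow_vec, zero_add]
  rw [hvec, ← Module.End.mul_apply, ← (hFE.pow_left a).eq, Module.End.mul_apply,
    actE_pow_vec_zero hN, vec_eq_zero (by omega), map_zero, LinearMap.zero_apply]

end ActE

section TorusOp

variable {k : Type*} [Field k] [Algebra k A]

/-- The action of a torus element which has value `w` on the generator and commutes with `E` and
`F` up to the scalars `c` and `c⁻¹`. -/
def torusOp (N : ℕ) (c : k) (w : A) : Module.End A (PBWModule N A) :=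
  actTorus N (algebraMap k A c) (algebraMap k A c⁻¹) w

theorem torusOp_mul (c d : k) (v w : A) :
    torusOp N c v * torusOp N d w = torusOp N (c * d) (v * w) := by
  rw [torusOp, torusOp, torusOp, actTorus_mul, ← map_mul, ← map_mul, mul_inv]

theorem torusOp_one : torusOp N (1 : k) (1 : A) = 1 := by
  rw [torusOp, inv_one, map_one, actTorus_one]

theorem torusOp_pow (c : k) (w : A) (m : ℕ) :
    torusOp N c w ^ m = torusOp N (c ^ m) (w ^ m) := by
  rw [torusOp, torusOp, actTorus_pow, ← map_pow, ← map_pow, inv_pow]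

theorem torusOp_pow_eq_one {c : k} {w : A} {m : ℕ} (hc : c ^ m = 1) (hw : w ^ m = 1) :
    torusOp N c w ^ m = 1 := by
  rw [torusOp_pow, hc, hw, torusOp_one]

theorem torusOp_mul_pow_pred {c : k} {w : A} {m : ℕ} (hm : m ≠ 0) (hc : c ^ m = 1)
    (hw : w ^ m = 1) : torusOp N c w * torusOp N c w ^ (m - 1) = 1 := by
  rw [mul_pow_sub_one hm, torusOp_pow_eq_one hc hw]

theorem qcommute_torusOp_actF (c : k) (w : A) : QCommute c⁻¹ (torusOp N c w) (actF N A) := by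
  have h := qcommute_actTorus_actF (N := N) (algebraMap k A c) (algebraMap k A c⁻¹) w
  rwa [QCommute, algebraMap_smul] at h

theorem qcommute_torusOp_actE {q p : A} (hN : ∑ i ∈ Finset.range N, q ^ i = 0) {c : k}
    (hc : c ≠ 0) (w z : A) : QCommute c (torusOp N c w) (actE N q p z) := by
  have h := qcommute_actTorus_actE hN (p := p) (s := algebraMap k A c) (t := algebraMap k A c⁻¹)
    (by rw [← map_mul, mul_inv_cancel₀ hc, map_one]) w z
  rwa [QCommute, algebraMap_smul] at h

end TorusOp

end PBWModule

/-- Two commuting elements satisfying the relations `xⁿ = 1` and `yⁿ = x⁻²` of `K` and `K̂`. -/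
structure IsTorusPair {G : Type*} [Monoid G] (n : ℕ) (x y : G) : Prop where
  commute : Commute x y
  pow_left : x ^ n = 1
  pow_right : y ^ n = (x ^ (n - 1)) ^ 2

namespace IsTorusPair

variable {G : Type*} [Monoid G] {n : ℕ} {x y : G}

theorem pow_sq_right (h : IsTorusPair n x y) : y ^ n ^ 2 = 1 := by
  rw [sq, pow_mul, h.pow_right, ← pow_mul, ← pow_mul, mul_comm 2 n, mul_left_comm, pow_mul,
    h.pow_left, one_pow]

theorem pow_half (h : IsTorusPair n x y) (h2 : 2 ∣ n) : (x ^ (n - 1) * y) ^ (n ^ 2 / 2) = 1 := by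
  obtain ⟨m, rfl⟩ := h2
  have hdiv : (2 * m) ^ 2 / 2 = 2 * m * m := by
    rw [sq, mul_assoc, Nat.mul_div_cancel_left _ two_pos]
    ring
  rw [hdiv, (h.commute.pow_left _).mul_pow, pow_mul y, h.pow_right, ← pow_mul, ← pow_mul,
    ← pow_mul, ← pow_add, show (2 * m - 1) * (2 * m * m) + (2 * m - 1) * (2 * m) =
      2 * m * ((2 * m - 1) * (m + 1)) by ring, pow_mul, h.pow_left, one_pow]

end IsTorusPair

section Scalars

variable {k : Type*} [Field k] {n : ℕ} {q : k}

theorem pow_pow_pred_eq_inv (hn : n ≠ 0) (hqN : q ^ n ^ 2 = 1) : (q ^ n) ^ (n - 1) = (q ^ n)⁻¹ := by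
  refine eq_inv_of_mul_eq_one_left ?_
  rw [← pow_succ, Nat.sub_add_cancel (Nat.pos_of_ne_zero hn), ← pow_mul, ← sq, hqN]

theorem pow_pred_mul_eq_inv_sq (hn : n ≠ 0) (hqN : q ^ n ^ 2 = 1) :
    (q ^ n) ^ (n - 1) * (q ^ n * (q ^ 2)⁻¹) = (q ^ 2)⁻¹ := by
  have hq0 : q ≠ 0 := by rintro rfl; simp [hn] at hqN
  rw [pow_pow_pred_eq_inv hn hqN, inv_mul_cancel_left₀ (pow_ne_zero _ hq0)]

theorem pow_mul_inv_sq_pow (hqN : q ^ n ^ 2 = 1) : (q ^ n * (q ^ 2)⁻¹) ^ n ^ 2 = 1 := by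
  rw [mul_pow, inv_pow, pow_right_comm, hqN, pow_right_comm, hqN, one_pow, one_pow, inv_one,
    mul_one]

end Scalars

section Rep

open PBWModule

variable {k : Type} [Field k] {n : ℕ} {q : k} {A : Type*} [CommRing A] [Algebra k A] {x y : A}

/-- The operators by which `K`, `K̂`, `E`, `F` act on the module induced from the torus
representation `K ↦ x`, `K̂ ↦ y`. -/
def genAct (n : ℕ) (q : k) (x y : A) : Fin 4 → Module.End A (PBWModule (n ^ 2) A) :=
  ![torusOp (n ^ 2) (q ^ n) x, torusOp (n ^ 2) (q ^ n * (q ^ 2)⁻¹) y,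
    actE (n ^ 2) (algebraMap k A q) (algebraMap k A q⁻¹) (x ^ (n - 1) * y), actF (n ^ 2) A]

theorem algebraMap_geom_sum_eq_zero (hn : 1 < n) (hq : IsPrimitiveRoot q (n ^ 2)) :
    ∑ i ∈ Finset.range (n ^ 2), algebraMap k A q ^ i = 0 := by
  simp only [← map_pow, ← map_sum, hq.geom_sum_eq_zero (Nat.one_lt_pow two_ne_zero hn), map_zero]

theorem genAct_rel (hn : 1 < n) (hq : IsPrimitiveRoot q (n ^ 2)) (hxy : IsTorusPair n x y)
    {a b : FreeAlgebra k (Fin 4)} (hab : Rel k n q a b) :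
    FreeAlgebra.lift k (genAct n q x y) a = FreeAlgebra.lift k (genAct n q x y) b := by
  have hn0 : n ≠ 0 := by omega
  have hqN := hq.pow_eq_one
  have hq0 : q ≠ 0 := hq.ne_zero (pow_ne_zero 2 hn0)
  have hqinv : algebraMap k A q * algebraMap k A q⁻¹ = 1 := by
    rw [← map_mul, mul_inv_cancel₀ hq0, map_one]
  have hgeom := algebraMap_geom_sum_eq_zero (A := A) hn hq
  have hgeom' := algebraMap_geom_sum_eq_zero (A := A) hn hq.inv
  have hqn : (q ^ n) ^ n = 1 := by rw [← pow_mul, ← sq, hqN]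
  have hK : torusOp (n ^ 2) (q ^ n) x * torusOp (n ^ 2) (q ^ n) x ^ (n - 1) = 1 :=
    torusOp_mul_pow_pred hn0 hqn hxy.pow_left
  have hKh : torusOp (n ^ 2) (q ^ n * (q ^ 2)⁻¹) y *
      torusOp (n ^ 2) (q ^ n * (q ^ 2)⁻¹) y ^ (n ^ 2 - 1) = 1 :=
    torusOp_mul_pow_pred (pow_ne_zero 2 hn0) (pow_mul_inv_sq_pow hqN) hxy.pow_sq_right
  cases hab <;>
    simp only [map_mul, map_pow, map_sub, map_one, map_zero, map_smul, FreeAlgebra.lift_ι_apply,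
      genAct, Matrix.cons_val]
  case Kord => exact torusOp_pow_eq_one hqn hxy.pow_left
  case Khord =>
    rw [torusOp_pow, torusOp_pow, torusOp_pow, hxy.pow_right, pow_pow_pred_eq_inv hn0 hqN, mul_pow,
      hqn, one_mul, inv_pow, inv_pow, pow_right_comm]
  case KKh => rw [torusOp_mul, torusOp_mul, mul_comm x, mul_comm (q ^ n)]
  case KE => exact (qcommute_torusOp_actE hgeom (by positivity) _ _).conj hK
  case KF => exact (qcommute_torusOp_actF _ _).conj hK
  case KhE => exact (qcommute_torusOp_actE hgeom (by positivity) _ _).conj hKh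
  case KhF => simpa [mul_comm] using (qcommute_torusOp_actF (q ^ n * (q ^ 2)⁻¹) y).conj hKh
  case Enil =>
    exact actE_pow_eq_zero hqinv hgeom hgeom' (by rw [← map_pow, hq.inv.pow_eq_one, map_one]) _
  case Fnil => exact actF_pow_eq_zero
  case EF =>
    rw [actF_mul_actE hqinv hgeom, algebraMap_smul, torusOp_pow, torusOp_mul,
      pow_pred_mul_eq_inv_sq hn0 hqN, torusOp, ← map_pow, ← map_pow, inv_inv, inv_pow]
    module

/-- The module induced from the torus representation `K ↦ x`, `K̂ ↦ y`. -/
def rep (hn : 1 < n) (hq : IsPrimitiveRoot q (n ^ 2)) (hxy : IsTorusPair n x y) :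
    U k n q →ₐ[k] Module.End A (PBWModule (n ^ 2) A) :=
  RingQuot.liftAlgHom k ⟨FreeAlgebra.lift k (genAct n q x y), fun _ _ => genAct_rel hn hq hxy⟩

section

variable (hn : 1 < n) (hq : IsPrimitiveRoot q (n ^ 2)) (hxy : IsTorusPair n x y)

theorem rep_K : rep hn hq hxy (K k n q) = torusOp (n ^ 2) (q ^ n) x := by simp [rep, K, genAct]

theorem rep_Kh : rep hn hq hxy (Kh k n q) = torusOp (n ^ 2) (q ^ n * (q ^ 2)⁻¹) y := by
  simp [rep, Kh, genAct]

theorem rep_E : rep hn hq hxy (E k n q) =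
    actE (n ^ 2) (algebraMap k A q) (algebraMap k A q⁻¹) (x ^ (n - 1) * y) := by
  simp [rep, E, genAct]

theorem rep_F : rep hn hq hxy (F k n q) = actF (n ^ 2) A := by simp [rep, F, genAct]

theorem rep_Kinv_mul_Kh :
    rep hn hq hxy (Kinv k n q * Kh k n q) = torusOp (n ^ 2) (q ^ 2)⁻¹ (x ^ (n - 1) * y) := by
  rw [Kinv, map_mul, map_pow, rep_K, rep_Kh, torusOp_pow, torusOp_mul,
    pow_pred_mul_eq_inv_sq (by omega) hq.pow_eq_one]

theorem rep_add_apply (u v : U k n q) (f : PBWModule (n ^ 2) A) :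
    rep hn hq hxy (u + v) f = rep hn hq hxy u f + rep hn hq hxy v f := by
  rw [map_add, LinearMap.add_apply]

/-- The action of `U` on the generator of the induced module `rep hn hq hxy`. -/
def actGen : U k n q →ₗ[k] PBWModule (n ^ 2) A where
  toFun u := rep hn hq hxy u (vec (n ^ 2) A 0 0)
  map_add' u v := rep_add_apply hn hq hxy u v _
  map_smul' c u := by rw [map_smul, LinearMap.smul_apply, RingHom.id_apply]

theorem actGen_apply (u : U k n q) :
    actGen hn hq hxy u = rep hn hq hxy u (vec (n ^ 2) A 0 0) := rfl

theorem actGen_mul (u v : U k n q) :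
    actGen hn hq hxy (u * v) = rep hn hq hxy u (actGen hn hq hxy v) := by
  rw [actGen_apply, map_mul, Module.End.mul_apply, actGen_apply]

theorem torusOp_vec_zero (c : k) (w : A) (b : ℕ) :
    torusOp (n ^ 2) c w (vec (n ^ 2) A 0 b) =
      (algebraMap k A c ^ b * w) • vec (n ^ 2) A 0 b := by
  rw [torusOp, actTorus_vec, pow_zero, mul_one]

/-- The elements of `U` taking the generator of `rep hn hq hxy` into the span of the `vec a b` with
`a < n ^ 2 - 1`. Taking `hxy` to be the universal torus pair, these turn out to be the elements
determined by their product with `F` on the left. -/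
def belowTop : Submodule k (U k n q) where
  carrier := {u | ∀ b < n ^ 2, coord (n ^ 2) A (n ^ 2 - 1) b (actGen hn hq hxy u) = 0}
  zero_mem' _ _ := by rw [map_zero, map_zero]
  add_mem' hu hv b hb := by rw [map_add, map_add, hu b hb, hv b hb, add_zero]
  smul_mem' c u hu b hb := by rw [map_smul, LinearMap.map_smul_of_tower, hu b hb, smul_zero]

theorem pbw_le_belowTop : pbw k n q ≤ belowTop hn hq hxy := by
  have hN : 1 < n ^ 2 := Nat.one_lt_pow two_ne_zero hn
  rw [pbw, Submodule.span_le]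
  rintro _ ⟨a, b', c, d, ha, -, -, -, rfl⟩ b hb
  have hlow : ¬(0 + a = n ^ 2 - 1 ∧ 0 + b' = b) := by omega
  simp only [actGen_apply, map_mul, map_pow, Module.End.mul_apply, rep_E,
    actE_pow_vec_zero (algebraMap_geom_sum_eq_zero hn hq), rep_F, rep_K, rep_Kh, torusOp_pow,
    torusOp_vec_zero, map_smul, actF_pow_vec,
    coord_vec (show n ^ 2 - 1 < n ^ 2 by omega) hb, if_neg hlow, smul_zero]

theorem Kinv_mul_Kh_mul_mem_belowTop {u : U k n q} (hu : u ∈ belowTop hn hq hxy) :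
    Kinv k n q * Kh k n q * u ∈ belowTop hn hq hxy := fun b hb => by
  rw [actGen_mul, rep_Kinv_mul_Kh, torusOp, coord_actTorus (by omega) hb, hu b hb, mul_zero]

end

end Rep

theorem U.induction {k : Type} [Field k] {n : ℕ} {q : k} {motive : U k n q → Prop}
    (algebraMap : ∀ c, motive (algebraMap k _ c)) (K : motive (K k n q)) (Kh : motive (Kh k n q))
    (E : motive (E k n q)) (F : motive (F k n q))
    (add : ∀ u v, motive u → motive v → motive (u + v))
    (mul : ∀ u v, motive u → motive v → motive (u * v)) (u : U k n q) : motive u := by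
  obtain ⟨a, rfl⟩ := RingQuot.mkAlgHom_surjective k (Rel k n q) u
  induction a using FreeAlgebra.induction with
  | grade0 c => simpa using algebraMap c
  | grade1 s => fin_cases s <;> assumption
  | mul a b ha hb => simpa using mul _ _ ha hb
  | add a b ha hb => simpa using add _ _ ha hb

section Relations

variable {k : Type} [Field k] {n : ℕ} {q : k}

theorem mkAlgHom_eq_of_rel {a b : FreeAlgebra k (Fin 4)} (h : Rel k n q a b) :
    RingQuot.mkAlgHom k (Rel k n q) a = RingQuot.mkAlgHom k (Rel k n q) b :=
  RingQuot.mkAlgHom_rel k h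

theorem isTorusPair_K_Kh : IsTorusPair n (K k n q) (Kh k n q) where
  commute := by
    simpa [K, Kh, commute_iff_eq] using mkAlgHom_eq_of_rel (Rel.KKh (k := k) (n := n) (q := q))
  pow_left := by simpa [K] using mkAlgHom_eq_of_rel (Rel.Kord (k := k) (n := n) (q := q))
  pow_right := by simpa [K, Kh] using mkAlgHom_eq_of_rel (Rel.Khord (k := k) (n := n) (q := q))

theorem E_pow_eq_zero : E k n q ^ n ^ 2 = 0 := by
  simpa [E] using mkAlgHom_eq_of_rel (Rel.Enil (k := k) (n := n) (q := q))

theorem F_pow_eq_zero : F k n q ^ n ^ 2 = 0 := by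
  simpa [F] using mkAlgHom_eq_of_rel (Rel.Fnil (k := k) (n := n) (q := q))

theorem F_mul_E : F k n q * E k n q =
    q⁻¹ • (E k n q * F k n q) + ((1 : k) • 1 + (-1 : k) • (Kinv k n q * Kh k n q)) := by
  have h : F k n q * E k n q - q⁻¹ • (E k n q * F k n q) = 1 - Kinv k n q * Kh k n q := by
    simpa [K, Kh, E, F, Kinv] using mkAlgHom_eq_of_rel (Rel.EF (k := k) (n := n) (q := q))
  rw [sub_eq_iff_eq_add'] at h
  rw [h]
  module

theorem E_mul_F (hq0 : q ≠ 0) : E k n q * F k n q =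
    q • (F k n q * E k n q) + ((-q) • 1 + q • (Kinv k n q * Kh k n q)) := by
  rw [F_mul_E]
  match_scalars <;> field_simp <;> ring

theorem K_pow_pred_mul (hn : n ≠ 0) : K k n q ^ (n - 1) * K k n q = 1 := by
  rw [pow_sub_one_mul hn, isTorusPair_K_Kh.pow_left]

theorem Kh_pow_pred_mul (hn : n ≠ 0) : Kh k n q ^ (n ^ 2 - 1) * Kh k n q = 1 := by
  rw [pow_sub_one_mul (pow_ne_zero 2 hn), isTorusPair_K_Kh.pow_sq_right]

theorem qcommute_K_E (hn : n ≠ 0) : QCommute (q ^ n) (K k n q) (E k n q) :=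
  .of_conj (by simpa [K, E] using mkAlgHom_eq_of_rel (Rel.KE (k := k) (n := n) (q := q)))
    (K_pow_pred_mul hn)

theorem qcommute_K_F (hn : n ≠ 0) : QCommute (q ^ n)⁻¹ (K k n q) (F k n q) :=
  .of_conj (by simpa [K, F] using mkAlgHom_eq_of_rel (Rel.KF (k := k) (n := n) (q := q)))
    (K_pow_pred_mul hn)

theorem qcommute_Kh_E (hn : n ≠ 0) : QCommute (q ^ n * (q ^ 2)⁻¹) (Kh k n q) (E k n q) :=
  .of_conj (by simpa [Kh, E] using mkAlgHom_eq_of_rel (Rel.KhE (k := k) (n := n) (q := q)))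
    (Kh_pow_pred_mul hn)

theorem qcommute_Kh_F (hn : n ≠ 0) : QCommute (q ^ n * (q ^ 2)⁻¹)⁻¹ (Kh k n q) (F k n q) :=
  .of_conj (by
    simpa [Kh, F, mul_comm] using mkAlgHom_eq_of_rel (Rel.KhF (k := k) (n := n) (q := q)))
    (Kh_pow_pred_mul hn)

theorem qcommute_Kinv_mul_Kh_E (hn : n ≠ 0) (hqN : q ^ n ^ 2 = 1) :
    QCommute (q ^ 2)⁻¹ (Kinv k n q * Kh k n q) (E k n q) := by
  rw [← pow_pred_mul_eq_inv_sq hn hqN]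
  exact ((qcommute_K_E hn).pow_left _).mul_left (qcommute_Kh_E hn)

theorem qcommute_Kinv_mul_Kh_F (hn : n ≠ 0) (hqN : q ^ n ^ 2 = 1) :
    QCommute (q ^ 2) (Kinv k n q * Kh k n q) (F k n q) := by
  rw [← inv_inv (q ^ 2), ← pow_pred_mul_eq_inv_sq hn hqN, mul_inv, ← inv_pow]
  exact ((qcommute_K_F hn).pow_left _).mul_left (qcommute_Kh_F hn)

end Relations

section PBW

open PBWModule
open scoped IsMulCommutative

variable (k : Type) [Field k] (n : ℕ) (q : k)

/-- The subalgebra of `U` generated by `K` and `K̂`. -/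
abbrev torus : Subalgebra k (U k n q) := Algebra.adjoin k {K k n q, Kh k n q}

instance : IsMulCommutative (torus k n q) :=
  Algebra.isMulCommutative_adjoin k (by
    have hcomm : K k n q * Kh k n q = Kh k n q * K k n q := isTorusPair_K_Kh.commute
    rintro a (rfl | rfl) b (rfl | rfl) <;> simp only [hcomm])

/-- `K` as an element of the torus. -/
def torusK : torus k n q := ⟨K k n q, Algebra.subset_adjoin (by simp)⟩

/-- `K̂` as an element of the torus. -/
def torusKh : torus k n q := ⟨Kh k n q, Algebra.subset_adjoin (by simp)⟩

theorem isTorusPair_torus : IsTorusPair n (torusK k n q) (torusKh k n q) where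
  commute := Commute.all _ _
  pow_left := Subtype.ext isTorusPair_K_Kh.pow_left
  pow_right := Subtype.ext isTorusPair_K_Kh.pow_right

/-- The map sending `t • vec a b` to `F ^ a * E ^ b * t`. -/
def ofPBW : PBWModule (n ^ 2) (torus k n q) →ₗ[k] U k n q :=
  Finsupp.lsum k fun p =>
    LinearMap.mulLeft k (F k n q ^ (p.1 : ℕ) * E k n q ^ (p.2 : ℕ)) ∘ₗ (torus k n q).val.toLinearMap

variable {k n q}

theorem ofPBW_smul_vec (t : torus k n q) (a b : ℕ) :
    ofPBW k n q (t • vec (n ^ 2) (torus k n q) a b) = F k n q ^ a * E k n q ^ b * t := by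
  by_cases h : a < n ^ 2 ∧ b < n ^ 2
  · simp [vec, h, ofPBW, mul_assoc]
  · have h0 : F k n q ^ a * E k n q ^ b = 0 := by
      rcases not_and_or.mp h with h | h
      · rw [pow_eq_zero_of_le (not_lt.mp h) F_pow_eq_zero, zero_mul]
      · rw [pow_eq_zero_of_le (not_lt.mp h) E_pow_eq_zero, mul_zero]
    rw [vec, dif_neg h, smul_zero, map_zero, h0, zero_mul]

theorem ofPBW_torusOp {c : k} {x : torus k n q} (hE : QCommute c (x : U k n q) (E k n q))
    (hF : QCommute c⁻¹ (x : U k n q) (F k n q)) (f : PBWModule (n ^ 2) (torus k n q)) :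
    ofPBW k n q (torusOp (n ^ 2) c x f) = x * ofPBW k n q f := by
  induction f using PBWModule.induction with
  | zero => simp
  | add f g hf hg => rw [map_add, map_add, hf, hg, map_add, mul_add]
  | smul_vec t a b =>
    have hcomm := (hF.pow_right a).mul_right (hE.pow_right b)
    rw [map_smul, torusOp, actTorus_vec, ← map_pow, ← map_pow, ← map_mul, ← Algebra.smul_def,
      smul_smul, mul_smul_comm, smul_assoc, map_smul, ofPBW_smul_vec, ofPBW_smul_vec,
      ← mul_assoc (x : U k n q), hcomm, smul_mul_assoc, mul_comm t, mul_assoc (_ * _), mul_comm]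
    rfl

theorem ofPBW_actF (f : PBWModule (n ^ 2) (torus k n q)) :
    ofPBW k n q (actF (n ^ 2) _ f) = F k n q * ofPBW k n q f := by
  induction f using PBWModule.induction with
  | zero => simp
  | add f g hf hg => rw [map_add, map_add, hf, hg, map_add, mul_add]
  | smul_vec t a b =>
    rw [map_smul, actF_vec, ofPBW_smul_vec, ofPBW_smul_vec, pow_succ']
    simp only [mul_assoc]

theorem E_mul_F_pow_succ (hn : n ≠ 0) (hqN : q ^ n ^ 2 = 1) (r : ℕ) :
    E k n q * F k n q ^ (r + 1) = q ^ (r + 1) • (F k n q ^ (r + 1) * E k n q) +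
      (∑ i ∈ Finset.range (r + 1), q ^ i) •
        ((-q) • F k n q ^ r + q ^ (r + 1) • (F k n q ^ r * (Kinv k n q * Kh k n q))) := by
  have hq0 : q ≠ 0 := by rintro rfl; simp [hn] at hqN
  rw [mul_pow_succ_of_mul_eq (E_mul_F hq0) (qcommute_Kinv_mul_Kh_F hn hqN), pow_succ' q r]

theorem coeffE_algebraMap {A : Type*} [CommRing A] [Algebra k A] (p : k) (z : A) (a b : ℕ) :
    coeffE (algebraMap k A q) (algebraMap k A p) z a b =
      (∑ i ∈ Finset.range a, q ^ i) • ((q ^ a * p ^ (2 * b)) • z - q • 1) := by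
  simp only [coeffE, Algebra.smul_def, map_sum, map_mul, map_pow, mul_one]

theorem E_mul_F_pow_succ_mul_E_pow (hn : n ≠ 0) (hqN : q ^ n ^ 2 = 1) (a b : ℕ) :
    E k n q * (F k n q ^ (a + 1) * E k n q ^ b) =
      q ^ (a + 1) • (F k n q ^ (a + 1) * E k n q ^ (b + 1)) +
        (∑ i ∈ Finset.range (a + 1), q ^ i) •
          ((q ^ (a + 1) * q⁻¹ ^ (2 * b)) •
              (F k n q ^ a * E k n q ^ b * (Kinv k n q * Kh k n q)) -
            q • (F k n q ^ a * E k n q ^ b)) := by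
  have hgE := (qcommute_Kinv_mul_Kh_E hn hqN).pow_right b
  rw [← mul_assoc, E_mul_F_pow_succ hn hqN]
  simp only [add_mul, smul_mul_assoc, mul_assoc _ (E k n q), mul_assoc _ (Kinv k n q * Kh k n q),
    ← pow_succ', hgE.eq, mul_smul_comm, mul_assoc _ (E k n q ^ b)]
  rw [pow_mul, inv_pow q 2]
  module

theorem ofPBW_actE (hn : 1 < n) (hq : IsPrimitiveRoot q (n ^ 2))
    (f : PBWModule (n ^ 2) (torus k n q)) :
    ofPBW k n q (actE (n ^ 2) (algebraMap k _ q) (algebraMap k _ q⁻¹)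
      (torusK k n q ^ (n - 1) * torusKh k n q) f) = E k n q * ofPBW k n q f := by
  induction f using PBWModule.induction with
  | zero => simp
  | add f g hf hg => rw [map_add, map_add, hf, hg, map_add, mul_add]
  | smul_vec t a b ha =>
    rw [map_smul, actE_vec (algebraMap_geom_sum_eq_zero hn hq) _ ha.le, smul_add, map_add,
      smul_smul, smul_smul, ofPBW_smul_vec, ofPBW_smul_vec, ofPBW_smul_vec]
    obtain _ | a := a
    · simp [coeffE, pow_succ', mul_assoc]
    · have hg : ((torusK k n q ^ (n - 1) * torusKh k n q : torus k n q) : U k n q) =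
          Kinv k n q * Kh k n q := rfl
      rw [← mul_assoc (E k n q), E_mul_F_pow_succ_mul_E_pow (by omega) hq.pow_eq_one,
        coeffE_algebraMap, Nat.add_sub_cancel, mul_comm t, mul_comm t, ← map_pow,
        ← Algebra.smul_def, smul_mul_assoc, ← hg]
      generalize torusK k n q ^ (n - 1) * torusKh k n q = z
      simp only [sub_mul, add_mul, smul_mul_assoc, one_mul, smul_sub, Subalgebra.coe_smul,
        Subalgebra.coe_sub, Subalgebra.coe_mul, Subalgebra.coe_one, mul_assoc, mul_sub,
        mul_smul_comm]

theorem ofPBW_rep (hn : 1 < n) (hq : IsPrimitiveRoot q (n ^ 2)) (u : U k n q)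
    (f : PBWModule (n ^ 2) (torus k n q)) :
    ofPBW k n q (rep hn hq (isTorusPair_torus k n q) u f) = u * ofPBW k n q f := by
  have hn0 : n ≠ 0 := by omega
  induction u using U.induction generalizing f with
  | algebraMap c => simp [Module.algebraMap_end_apply, Algebra.smul_def]
  | K => rw [rep_K]; exact ofPBW_torusOp (qcommute_K_E hn0) (qcommute_K_F hn0) f
  | Kh => rw [rep_Kh]; exact ofPBW_torusOp (qcommute_Kh_E hn0) (qcommute_Kh_F hn0) f
  | E => rw [rep_E, ofPBW_actE hn hq]
  | F => rw [rep_F, ofPBW_actF]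
  | add u v hu hv => rw [rep_add_apply, map_add, hu, hv, add_mul]
  | mul u v hu hv => rw [map_mul, Module.End.mul_apply, hu, hv, mul_assoc]

/-- The coefficients of an element of `U` with respect to the family `F ^ a * E ^ b`, where `U` is
regarded as a right module over the torus. -/
abbrev pbwCoeff (hn : 1 < n) (hq : IsPrimitiveRoot q (n ^ 2)) :
    U k n q →ₗ[k] PBWModule (n ^ 2) (torus k n q) :=
  actGen hn hq (isTorusPair_torus k n q)

theorem ofPBW_pbwCoeff (hn : 1 < n) (hq : IsPrimitiveRoot q (n ^ 2)) (u : U k n q) :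
    ofPBW k n q (pbwCoeff hn hq u) = u := by
  have hvec : ofPBW k n q (vec (n ^ 2) _ 0 0) = 1 := by
    simpa using ofPBW_smul_vec (k := k) (n := n) (q := q) 1 0 0
  rw [actGen_apply, ofPBW_rep, hvec, mul_one]

theorem eq_of_F_mul_eq (hn : 1 < n) (hq : IsPrimitiveRoot q (n ^ 2)) {u v : U k n q}
    (hu : u ∈ belowTop (A := torus k n q) hn hq (isTorusPair_torus k n q))
    (hv : v ∈ belowTop (A := torus k n q) hn hq (isTorusPair_torus k n q))
    (h : F k n q * u = F k n q * v) : u = v := by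
  have hactF : actF (n ^ 2) _ (pbwCoeff hn hq (u - v)) = 0 := by
    rw [← rep_F hn hq (isTorusPair_torus k n q), ← actGen_mul, mul_sub, h, sub_self, map_zero]
  have hcoeff : pbwCoeff hn hq (u - v) = 0 := eq_zero_of_coord_eq_zero fun a b ha hb => by
    obtain rfl | ha' : a = n ^ 2 - 1 ∨ a + 1 < n ^ 2 := by omega
    · exact sub_mem hu hv b hb
    · rw [← coord_actF ha' hb, hactF, map_zero]
  rw [← sub_eq_zero, ← ofPBW_pbwCoeff hn hq (u - v), hcoeff, map_zero]

theorem torus_le_span (hn : n ≠ 0) : (torus k n q).toSubmodule ≤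
    Submodule.span k
      {u | ∃ c d : ℕ, c ≤ n - 1 ∧ d ≤ n ^ 2 - 1 ∧ u = K k n q ^ c * Kh k n q ^ d} := by
  have hpair := isTorusPair_K_Kh (k := k) (n := n) (q := q)
  rw [Algebra.adjoin_eq_span]
  refine Submodule.span_mono fun u hu => ?_
  obtain ⟨c, d, rfl⟩ : ∃ c d : ℕ, u = K k n q ^ c * Kh k n q ^ d := by
    induction hu using Submonoid.closure_induction with
    | mem u hu =>
      obtain rfl | rfl := hu
      exacts [⟨1, 0, by simp⟩, ⟨0, 1, by simp⟩]
    | one => exact ⟨0, 0, by simp⟩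
    | mul u v _ _ hu hv =>
      obtain ⟨c, d, rfl⟩ := hu
      obtain ⟨c', d', rfl⟩ := hv
      exact ⟨c + c', d + d', by
        rw [pow_add, pow_add, (hpair.commute.symm.pow_pow d c').mul_mul_mul_comm]⟩
  have hc := Nat.mod_lt c (Nat.pos_of_ne_zero hn)
  have hd := Nat.mod_lt d (Nat.pow_pos (n := 2) (Nat.pos_of_ne_zero hn))
  exact ⟨c % n, d % n ^ 2, by omega, by omega, by
    rw [← pow_eq_pow_mod c hpair.pow_left, ← pow_eq_pow_mod d hpair.pow_sq_right]⟩

theorem monomial_mem_pbw (hn : 1 < n) (hq : IsPrimitiveRoot q (n ^ 2)) {a b : ℕ}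
    (ha : a ≤ n ^ 2 - 2) (hb : b ≤ n ^ 2 - 1) {t : U k n q} (ht : t ∈ torus k n q) :
    F k n q ^ a * E k n q ^ b * t ∈ pbw k n q := by
  have hn0 : n ≠ 0 := by omega
  have hq0 : q ≠ 0 := hq.ne_zero (pow_ne_zero 2 hn0)
  replace ht := torus_le_span hn0 ht
  induction ht using Submodule.span_induction with
  | zero => rw [mul_zero]; exact zero_mem _
  | add s t _ _ hs ht => rw [mul_add]; exact add_mem hs ht
  | smul c t _ ht => rw [mul_smul_comm]; exact Submodule.smul_mem _ _ ht
  | mem t ht =>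
    obtain ⟨c, d, hc, hd, rfl⟩ := ht
    have hcomm := (((qcommute_K_E (q := q) hn0).pow_left c).mul_left
      ((qcommute_Kh_E hn0).pow_left d)).pow_right b
    rw [mul_assoc, (hcomm.symm (inv_mul_cancel₀ (by positivity))).eq, mul_smul_comm]
    exact Submodule.smul_mem _ _ (Submodule.subset_span
      ⟨a, b, c, d, ha, hb, hc, hd, by simp only [mul_assoc]⟩)

theorem exists_mem_pbw_F_mul_eq (hn : 1 < n) (hq : IsPrimitiveRoot q (n ^ 2)) (u : U k n q) :
    ∃ w ∈ pbw k n q, F k n q * w = F k n q * u := by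
  rw [← ofPBW_pbwCoeff hn hq u]
  induction pbwCoeff hn hq u using PBWModule.induction with
  | zero => exact ⟨0, zero_mem _, by rw [map_zero]⟩
  | add f g hf hg =>
    obtain ⟨v, hv, hv'⟩ := hf
    obtain ⟨w, hw, hw'⟩ := hg
    exact ⟨v + w, add_mem hv hw, by rw [map_add, mul_add, mul_add, hv', hw']⟩
  | smul_vec t a b ha hb =>
    rw [ofPBW_smul_vec]
    obtain rfl | ha' : a = n ^ 2 - 1 ∨ a ≤ n ^ 2 - 2 := by omega
    · refine ⟨0, zero_mem _, ?_⟩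
      rw [mul_zero, ← mul_assoc, ← mul_assoc, mul_pow_sub_one (by positivity), F_pow_eq_zero,
        zero_mul, zero_mul]
    · exact ⟨_, monomial_mem_pbw hn hq ha' (by omega) t.2, rfl⟩

theorem exists_E_pow_mul_F_pow_eq (hn : n ≠ 0) (hqN : q ^ n ^ 2 = 1) (a l : ℕ) (u : U k n q) :
    ∃ w, E k n q ^ l * (F k n q ^ (a + l) * u) = F k n q ^ a * w := by
  induction l generalizing u with
  | zero => exact ⟨u, by rw [pow_zero, one_mul, add_zero]⟩
  | succ l ih =>
    have hEF : E k n q * (F k n q ^ (a + l + 1) * u) = F k n q ^ (a + l) *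
        (q ^ (a + l + 1) • (F k n q * (E k n q * u)) + (∑ i ∈ Finset.range (a + l + 1), q ^ i) •
          ((-q) • u + q ^ (a + l + 1) • (Kinv k n q * Kh k n q * u))) := by
      rw [← mul_assoc, E_mul_F_pow_succ hn hqN, pow_succ (F k n q)]
      simp only [add_mul, mul_add, smul_mul_assoc, mul_smul_comm, mul_assoc]
    rw [pow_succ, mul_assoc, ← add_assoc, hEF]
    exact ih _

end PBW

section Weights

open scoped IsMulCommutative

variable {k : Type} [Field k] {n : ℕ} {q : k} {i j : ℕ}

theorem Kinv_mul_Kh_mul_phi (h2 : 2 ∣ n) (hqN : q ^ n ^ 2 = 1) (i : ℕ) :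
    Kinv k n q * Kh k n q * phi k n q i = q ^ (2 * i) • phi k n q i := by
  obtain rfl | hn := eq_or_ne n 0
  · simp [phi]
  have hq0 : q ≠ 0 := by rintro rfl; simp [hn] at hqN
  have hhalf : 2 * (n ^ 2 / 2) = n ^ 2 := Nat.mul_div_cancel' (dvd_pow h2 two_ne_zero)
  set g := Kinv k n q * Kh k n q
  have hg : (q⁻¹ ^ (2 * i) • g) ^ (n ^ 2 / 2) = 1 := by
    rw [smul_pow, show g ^ (n ^ 2 / 2) = 1 from isTorusPair_K_Kh.pow_half h2, ← pow_mul,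
      mul_right_comm, hhalf, pow_mul, inv_pow, hqN, inv_one, one_pow, one_smul]
  have hsum := mul_geom_sum (q⁻¹ ^ (2 * i) • g) (n ^ 2 / 2)
  rw [hg, sub_self, sub_mul, one_mul, sub_eq_zero, smul_mul_assoc, inv_pow,
    inv_smul_eq_iff₀ (by positivity), ← inv_pow] at hsum
  simp only [smul_pow, ← pow_mul] at hsum
  rw [phi, mul_smul_comm, hsum, smul_comm]

theorem Kinv_mul_Kh_mul_alpha (h2 : 2 ∣ n) (hn : n ≠ 0) (hqN : q ^ n ^ 2 = 1) (hi : 1 ≤ i) :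
    Kinv k n q * Kh k n q * alpha k n q i j = q ^ (2 * i - 2) • alpha k n q i j := by
  have hexp : (q ^ 2) ^ (n ^ 2 - 1) * q ^ (2 * i) = q ^ (2 * i - 2) := by
    have hpos : 0 < n ^ 2 := by positivity
    rw [← pow_mul, ← pow_add, show 2 * (n ^ 2 - 1) + 2 * i = n ^ 2 * 2 + (2 * i - 2) by omega,
      pow_add, pow_mul, hqN, one_pow, one_mul]
  rw [alpha, eIdem, ← mul_assoc, ((qcommute_Kinv_mul_Kh_F hn hqN).pow_right _).eq, smul_mul_assoc,
    mul_assoc, ← mul_assoc _ (phi k n q i), Kinv_mul_Kh_mul_phi h2 hqN, smul_mul_assoc,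
    mul_smul_comm, smul_smul, hexp]

theorem Kinv_mul_Kh_mul_E_pow_mul (hn : n ≠ 0) (hqN : q ^ n ^ 2 = 1) {c : k} {u : U k n q}
    (hu : Kinv k n q * Kh k n q * u = c • u) (m : ℕ) :
    Kinv k n q * Kh k n q * (E k n q ^ m * u) = (q⁻¹ ^ (2 * m) * c) • (E k n q ^ m * u) := by
  rw [← mul_assoc, ((qcommute_Kinv_mul_Kh_E hn hqN).pow_right m).eq, smul_mul_assoc, mul_assoc, hu,
    mul_smul_comm, smul_smul, pow_mul, inv_pow q]

theorem exists_F_mul_eq_beta (hn : n ≠ 0) (hqN : q ^ n ^ 2 = 1) (hi : 1 ≤ i) (hin : i ≤ n ^ 2 / 2) :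
    ∃ w, F k n q * w = beta k n q i j := by
  obtain ⟨w, hw⟩ := exists_E_pow_mul_F_pow_eq hn hqN (n ^ 2 - 2 * i + 1) (2 * i - 2)
    (eIdem k n q i j)
  refine ⟨F k n q ^ (n ^ 2 - 2 * i) * w, ?_⟩
  rw [beta, alpha, show n ^ 2 - 1 = n ^ 2 - 2 * i + 1 + (2 * i - 2) by omega, hw,
    pow_succ' (F k n q), mul_assoc]

theorem gam_spec (hn : 1 < n) (hq : IsPrimitiveRoot q (n ^ 2)) (hi : 1 ≤ i)
    (hin : i ≤ n ^ 2 / 2) :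
    gam k n q i j ∈ pbw k n q ∧ F k n q * gam k n q i j = beta k n q i j := by
  have h : ∃! w, w ∈ pbw k n q ∧ F k n q * w = beta k n q i j := by
    obtain ⟨u, hu⟩ := exists_F_mul_eq_beta (j := j) (by omega) hq.pow_eq_one hi hin
    obtain ⟨w, hw, hFw⟩ := exists_mem_pbw_F_mul_eq hn hq u
    exact ⟨w, ⟨hw, hFw.trans hu⟩, fun v hv =>
      eq_of_F_mul_eq hn hq (pbw_le_belowTop _ _ _ hv.1)
        (pbw_le_belowTop _ _ _ hw) (hv.2.trans (hFw.trans hu).symm)⟩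
  rw [gam, dif_pos h]
  exact h.choose_spec.1

theorem Kinv_mul_Kh_mul_gam (h2 : 2 ∣ n) (hn : 1 < n) (hq : IsPrimitiveRoot q (n ^ 2))
    (hi : 1 ≤ i) (hin : i ≤ n ^ 2 / 2) :
    Kinv k n q * Kh k n q * gam k n q i j = q⁻¹ ^ (2 * i) • gam k n q i j := by
  obtain ⟨hmem, hF⟩ := gam_spec (j := j) hn hq hi hin
  have hn0 : n ≠ 0 := by omega
  have hq0 : q ≠ 0 := hq.ne_zero (pow_ne_zero 2 hn0)
  have hbeta : Kinv k n q * Kh k n q * beta k n q i j =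
      (q⁻¹ ^ (2 * (2 * i - 2)) * q ^ (2 * i - 2)) • beta k n q i j :=
    Kinv_mul_Kh_mul_E_pow_mul hn0 hq.pow_eq_one
      (Kinv_mul_Kh_mul_alpha h2 hn0 hq.pow_eq_one hi) _
  have hFg : F k n q * (Kinv k n q * Kh k n q * gam k n q i j) =
      (q ^ 2)⁻¹ • (Kinv k n q * Kh k n q * beta k n q i j) := by
    rw [← hF, ← mul_assoc (_ * _) (F k n q), (qcommute_Kinv_mul_Kh_F hn0 hq.pow_eq_one).eq,
      smul_mul_assoc, inv_smul_smul₀ (by positivity), mul_assoc (F k n q)]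
  have hexp : (q ^ 2)⁻¹ * (q⁻¹ ^ (2 * (2 * i - 2)) * q ^ (2 * i - 2)) = q⁻¹ ^ (2 * i) := by
    obtain ⟨m, rfl⟩ := Nat.exists_eq_add_of_le hi
    rw [show 2 * (1 + m) - 2 = 2 * m by omega]
    simp only [inv_pow]
    field_simp
    ring
  refine eq_of_F_mul_eq hn hq (Kinv_mul_Kh_mul_mem_belowTop _ _ _ (pbw_le_belowTop _ _ _ hmem))
    (Submodule.smul_mem _ _ (pbw_le_belowTop _ _ _ hmem)) ?_
  rw [hFg, hbeta, mul_smul_comm, hF, smul_smul, hexp]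

end Weights

section Nonvanishing

open PBWModule

variable {k : Type} [Field k] {n : ℕ} {q : k} {i j : ℕ}

section

variable (hn : 1 < n) (hq : IsPrimitiveRoot q (n ^ 2)) {x y : k} (hxy : IsTorusPair n x y)

theorem rep_phi_vec (h2 : 2 ∣ n) (hval : x ^ (n - 1) * y = q ^ (2 * i)) :
    rep hn hq hxy (phi k n q i) (vec (n ^ 2) k 0 0) = vec (n ^ 2) k 0 0 := by
  have : NeZero (n ^ 2) := ⟨pow_ne_zero 2 (by omega)⟩
  have hchar : ((n ^ 2 : ℕ) : k) ≠ 0 := hq.neZero'.ne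
  have hhalf : ((n ^ 2 / 2 : ℕ) : k) * 2 = (n ^ 2 : ℕ) := by
    exact_mod_cast congrArg (Nat.cast (R := k)) (Nat.div_mul_cancel (dvd_pow h2 two_ne_zero))
  have hterm (t : ℕ) : q⁻¹ ^ (2 * i * t) * (x ^ (n - 1) * y) ^ t = 1 := by
    rw [hval, ← pow_mul, ← mul_pow, inv_mul_cancel₀ (hq.ne_zero (NeZero.ne _)), one_pow]
  simp only [phi, map_smul, map_sum, map_pow, rep_Kinv_mul_Kh, torusOp_pow, LinearMap.smul_apply,
    LinearMap.sum_apply, torusOp_vec_zero, pow_zero, one_mul, smul_smul, hterm, one_smul,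
    Finset.sum_const, Finset.card_range]
  rw [← Nat.cast_smul_eq_nsmul k, smul_smul, mul_assoc, mul_comm 2, hhalf, ← Nat.cast_pow,
    inv_mul_cancel₀ hchar, one_smul]

theorem rep_oneJ_vec (h2 : (2 : k) ≠ 0) (hval : x * y ^ (n / 2) = (-1) ^ j) (hj : j ≤ 1) :
    rep hn hq hxy (oneJ k n q j) (vec (n ^ 2) k 0 0) = vec (n ^ 2) k 0 0 := by
  have hKKh : rep hn hq hxy (K k n q * Kh k n q ^ (n / 2)) (vec (n ^ 2) k 0 0) =
      (-1 : k) ^ j • vec (n ^ 2) k 0 0 := by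
    rw [map_mul, map_pow, rep_K, rep_Kh, torusOp_pow, torusOp_mul, torusOp_vec_zero, pow_zero,
      one_mul, hval]
  interval_cases j <;>
    simp only [oneJ, if_pos, one_ne_zero, if_false, map_smul, map_add, map_sub, map_one, hKKh,
      LinearMap.smul_apply, LinearMap.add_apply, LinearMap.sub_apply, Module.End.one_apply] <;>
    match_scalars <;> field_simp <;> norm_num

end

theorem exists_isTorusPair (hn : n ≠ 0) (h4 : 4 ∣ n) (hq : IsPrimitiveRoot q (n ^ 2)) (i j : ℕ) :
    ∃ x y : k, IsTorusPair n x y ∧ x ^ (n - 1) * y = q ^ (2 * i) ∧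
      x * y ^ (n / 2) = (-1) ^ j := by
  have hq0 : q ≠ 0 := hq.ne_zero (pow_ne_zero 2 hn)
  obtain ⟨m, hm⟩ := h4
  have hqhalf : q ^ (n * (2 * m)) = -1 :=
    (hq.pow (by positivity) (by rw [hm]; ring : n ^ 2 = n * (2 * m) * 2)).eq_neg_one_of_two_right
  have hx0 : ((-1) ^ (i + j) * q⁻¹ ^ (n * i) : k) ≠ 0 :=
    mul_ne_zero (pow_ne_zero _ (neg_ne_zero.mpr one_ne_zero)) (by positivity)
  have hxhalf : ((-1) ^ (i + j) * q⁻¹ ^ (n * i) : k) ^ (2 * m) = (-1) ^ i := by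
    rw [mul_pow, ← pow_mul, ← pow_mul, Even.neg_one_pow ⟨(i + j) * m, by ring⟩, one_mul,
      mul_right_comm n i, pow_mul, inv_pow, hqhalf, inv_neg_one]
  have hx : ((-1) ^ (i + j) * q⁻¹ ^ (n * i) : k) ^ n = 1 := by
    rw [show n = 2 * m * 2 by omega, pow_mul, ← show n = 2 * m * 2 by omega, hxhalf, ← pow_mul,
      Even.neg_one_pow ⟨i, by ring⟩]
  have hinv : ((-1) ^ (i + j) * q⁻¹ ^ (n * i) : k) ^ (n - 1) =
      ((-1) ^ (i + j) * q⁻¹ ^ (n * i))⁻¹ :=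
    eq_inv_of_mul_eq_one_left (by rw [pow_sub_one_mul hn, hx])
  refine ⟨(-1) ^ (i + j) * q⁻¹ ^ (n * i), q ^ (2 * i) * ((-1) ^ (i + j) * q⁻¹ ^ (n * i)),
    ⟨Commute.all _ _, hx, ?_⟩, ?_, ?_⟩
  · rw [mul_pow, hx, mul_one, hinv, inv_pow, mul_pow, ← pow_mul, ← pow_mul, ← pow_mul,
      Even.neg_one_pow ⟨i + j, by ring⟩, one_mul, inv_pow, inv_inv, mul_assoc 2, mul_comm 2,
      mul_comm i]
  · rw [hinv, mul_comm (q ^ _), inv_mul_cancel_left₀ hx0]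
  · have hqx : q⁻¹ ^ (n * i) * q ^ (2 * i * (2 * m)) = 1 := by
      rw [show 2 * i * (2 * m) = n * i by rw [hm]; ring, ← mul_pow, inv_mul_cancel₀ hq0, one_pow]
    have hsign : ((-1) ^ i * (-1) ^ i : k) = 1 := by
      rw [← pow_add, Even.neg_one_pow ⟨i, rfl⟩]
    rw [show n / 2 = 2 * m by omega, mul_pow, hxhalf, ← pow_mul, pow_add]
    linear_combination ((-1) ^ i * (-1) ^ i * (-1) ^ j) * hqx + (-1) ^ j * hsign

theorem E_pow_pred_mul_alpha_ne_zero (hn : n ≠ 0) (h4 : 4 ∣ n) (hq : IsPrimitiveRoot q (n ^ 2))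
    (i : ℕ) (hj : j ≤ 1) : E k n q ^ (n ^ 2 - 1) * alpha k n q i j ≠ 0 := by
  obtain ⟨x, y, hxy, hphi, hone⟩ := exists_isTorusPair hn h4 hq i j
  have hn1 : 1 < n := by omega
  have h2 : (2 : k) ≠ 0 := by
    have : NeZero (n ^ 2) := ⟨pow_ne_zero 2 hn⟩
    have hchar := hq.neZero'.ne
    obtain ⟨m, rfl⟩ := h4
    contrapose hchar
    push_cast
    linear_combination 8 * m ^ 2 * hchar
  have halpha : actGen hn1 hq hxy (alpha k n q i j) = vec (n ^ 2) k (n ^ 2 - 1) 0 := by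
    rw [alpha, eIdem, actGen_apply, map_mul, map_mul, Module.End.mul_apply, Module.End.mul_apply,
      rep_oneJ_vec hn1 hq hxy h2 hone hj,
      rep_phi_vec hn1 hq hxy (by omega) hphi, map_pow, rep_F, actF_pow_vec, zero_add]
  intro h
  have hN : n ^ 2 - 1 < n ^ 2 := by have := Nat.one_lt_pow two_ne_zero hn1; omega
  have hcoord := congrArg (coord (n ^ 2) k (n ^ 2 - 1) (n ^ 2 - 1)) (congrArg (actGen hn1 hq hxy) h)
  rw [actGen_mul, halpha, map_pow, rep_E,
    coord_top_actE_pow (algebraMap_geom_sum_eq_zero hn1 hq) _ hN, coord_vec hN (by omega),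
    if_pos ⟨rfl, rfl⟩, map_zero, map_zero, mul_one] at hcoord
  exact pow_ne_zero _ (pow_ne_zero _ (hq.ne_zero (pow_ne_zero 2 hn))) hcoord

theorem F_mul_E_pow_succ (hn : n ≠ 0) (hqN : q ^ n ^ 2 = 1) (r : ℕ) :
    F k n q * E k n q ^ (r + 1) = q⁻¹ ^ (r + 1) • (E k n q ^ (r + 1) * F k n q) +
      (∑ t ∈ Finset.range (r + 1), q⁻¹ ^ t) •
        (E k n q ^ r - q⁻¹ ^ r • (E k n q ^ r * (Kinv k n q * Kh k n q))) := by
  have hgE := qcommute_Kinv_mul_Kh_E (k := k) hn hqN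
  rw [← inv_pow] at hgE
  rw [mul_pow_succ_of_mul_eq F_mul_E hgE]
  module

theorem F_mul_E_pow_succ_mul_gam (h2 : 2 ∣ n) (hn : 1 < n) (hq : IsPrimitiveRoot q (n ^ 2))
    (hi : 1 ≤ i) (hin : i ≤ n ^ 2 / 2) (r : ℕ) :
    F k n q * (E k n q ^ (r + 1) * gam k n q i j) =
      q⁻¹ ^ (r + 1) • (E k n q ^ (r + 2 * i - 1) * alpha k n q i j) +
        ((∑ t ∈ Finset.range (r + 1), q⁻¹ ^ t) * (1 - q⁻¹ ^ (r + 2 * i))) •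
          (E k n q ^ r * gam k n q i j) := by
  rw [← mul_assoc, F_mul_E_pow_succ (by omega) hq.pow_eq_one, add_mul, smul_mul_assoc,
    smul_mul_assoc, sub_mul, smul_mul_assoc, mul_assoc _ (F k n q), (gam_spec hn hq hi hin).2,
    beta, ← mul_assoc, ← pow_add, show r + 1 + (2 * i - 2) = r + 2 * i - 1 by omega,
    mul_assoc _ _ (gam k n q i j), Kinv_mul_Kh_mul_gam h2 hn hq hi hin, mul_smul_comm]
  module

theorem E_pow_pred_mul_gam_ne_zero (hn : n ≠ 0) (h4 : 4 ∣ n) (hq : IsPrimitiveRoot q (n ^ 2))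
    (hi : 1 ≤ i) (hin : i ≤ n ^ 2 / 2) (hj : j ≤ 1) :
    E k n q ^ (n ^ 2 - 1) * gam k n q i j ≠ 0 := by
  have h2 : 2 ∣ n := by omega
  have hn1 : 1 < n := by omega
  have hgeom {m : ℕ} (hm : m ≠ 0) (hmN : m < n ^ 2) : ∑ t ∈ Finset.range m, q⁻¹ ^ t ≠ 0 :=
    fun h => hq.inv.pow_ne_one_of_pos_of_lt hm hmN <| by
      rw [← sub_eq_zero, ← geom_sum_mul, h, zero_mul]
  have hstep {r : ℕ} (hr : r + 1 < n ^ 2) (hr' : n ^ 2 < r + 2 * i)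
      (h : E k n q ^ (r + 1) * gam k n q i j = 0) : E k n q ^ r * gam k n q i j = 0 := by
    have hq1 : 1 - q⁻¹ ^ (r + 2 * i) ≠ 0 := by
      rw [sub_ne_zero, ne_comm, Ne, hq.inv.pow_eq_one_iff_dvd]
      rintro ⟨c, hc⟩
      have hc1 : 1 < c := by by_contra!; nlinarith
      have hc2 : c < 2 := by by_contra!; nlinarith [Nat.div_mul_le_self (n ^ 2) 2]
      omega
    have hF := F_mul_E_pow_succ_mul_gam (j := j) h2 hn1 hq hi hin r
    rw [h, mul_zero, pow_eq_zero_of_le (by omega) E_pow_eq_zero, zero_mul, smul_zero, zero_add,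
      eq_comm] at hF
    exact (smul_eq_zero.mp hF).resolve_left (mul_ne_zero (hgeom (by omega) hr) hq1)
  intro h
  have hdown {m : ℕ} (hm : n ^ 2 - 2 * i + 1 ≤ m) (hmN : m ≤ n ^ 2 - 1) :
      E k n q ^ m * gam k n q i j = 0 := by
    induction hmN using Nat.decreasingInduction with
    | self => exact h
    | of_succ r hr ih => exact hstep (by omega) (by omega) (ih (by omega))
  have hF := F_mul_E_pow_succ_mul_gam (j := j) h2 hn1 hq hi hin (n ^ 2 - 2 * i)
  rw [hdown le_rfl (by omega), show n ^ 2 - 2 * i + 2 * i = n ^ 2 by omega, hq.inv.pow_eq_one,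
    sub_self, mul_zero, mul_zero, zero_smul, add_zero, eq_comm, smul_eq_zero] at hF
  exact hF.elim (pow_ne_zero _ (hq.inv.ne_zero (by positivity)))
    (E_pow_pred_mul_alpha_ne_zero hn h4 hq i hj)

theorem linearIndependent_E_pow_pred_mul (hn : n ≠ 0) (h4 : 4 ∣ n)
    (hq : IsPrimitiveRoot q (n ^ 2)) (hi : 1 ≤ i) (hin : i ≤ n ^ 2 / 2) (hj : j ≤ 1) :
    LinearIndependent k fun b : Bool =>
      E k n q ^ (n ^ 2 - 1) * bif b then gam k n q i j else alpha k n q i j := by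
  have h2 : 2 ∣ n := by omega
  have hq0 : q ≠ 0 := hq.ne_zero (pow_ne_zero 2 hn)
  have hweight : q ^ (2 * i - 2) ≠ q⁻¹ ^ (2 * i) := fun h => by
    have hone : q ^ (2 * i - 2 + 2 * i) = 1 := by
      rw [pow_add, h, ← mul_pow, inv_mul_cancel₀ hq0, one_pow]
    have h4dvd := (dvd_pow h4 two_ne_zero).trans ((hq.pow_eq_one_iff_dvd _).mp hone)
    omega
  refine Module.End.eigenvectors_linearIndependent' (LinearMap.mulLeft k (Kinv k n q * Kh k n q))
    (fun b => q⁻¹ ^ (2 * (n ^ 2 - 1)) * bif b then q⁻¹ ^ (2 * i) else q ^ (2 * i - 2)) ?_ _ ?_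
  · exact Bool.injective_iff.mpr fun h => hweight (mul_left_cancel₀ (by positivity) h)
  · rintro (_ | _)
    · exact ⟨Module.End.mem_eigenspace_iff.mpr (Kinv_mul_Kh_mul_E_pow_mul hn hq.pow_eq_one
        (Kinv_mul_Kh_mul_alpha h2 hn hq.pow_eq_one hi) _),
        E_pow_pred_mul_alpha_ne_zero hn h4 hq i hj⟩
    · exact ⟨Module.End.mem_eigenspace_iff.mpr (Kinv_mul_Kh_mul_E_pow_mul hn hq.pow_eq_one
        (Kinv_mul_Kh_mul_gam h2 (by omega) hq hi hin) _),
        E_pow_pred_mul_gam_ne_zero hn h4 hq hi hin hj⟩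

end Nonvanishing

end QFL

open QFL in
theorem statement5_general {k : Type} [Field k] {n : ℕ} (h4 : 4 ∣ n) {q : k}
    (hq : IsPrimitiveRoot q (n ^ 2)) {i j : ℕ} (hi : 1 ≤ i) (hin : i ≤ n ^ 2 / 2) (hj : j ≤ 1) :
    LinearIndependent k
      (Sum.elim (fun l : Fin (n ^ 2) => E k n q ^ (l : ℕ) * alpha k n q i j)
        (fun l : Fin (n ^ 2) => E k n q ^ (l : ℕ) * gam k n q i j)) := by
  have hn : n ≠ 0 := by rintro rfl; omega
  have hT (m : ℕ) (u : U k n q) : (LinearMap.mulLeft k (E k n q) ^ m) u = E k n q ^ m * u := by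
    rw [LinearMap.pow_mulLeft, LinearMap.mulLeft_apply]
  have h := linearIndependent_pow_apply (N := n ^ 2) (LinearMap.mulLeft k (E k n q))
    (fun b : Bool => bif b then gam k n q i j else alpha k n q i j)
    (fun b => by rw [hT, E_pow_eq_zero, zero_mul])
    (by simpa only [hT] using linearIndependent_E_pow_pred_mul hn h4 hq hi hin hj)
  refine (linearIndependent_equiv' (Equiv.boolProdEquivSum _) ?_).mp h
  ext ⟨_ | _, l⟩ <;> simp

open QFL in
/-- Corollary 2.9: the `2n²` vectors `E^l α_{2i,j}`, `E^l γ_{2i,j}` (`0 ≤ l ≤ n²-1`)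
are linearly independent over `k`. -/
theorem statement5 (k : Type) [Field k] [IsAlgClosed k] [CharZero k]
    (n : ℕ) (hn : 0 < n) (h4 : 4 ∣ n) (q : k) (hq : IsPrimitiveRoot q (n ^ 2)) :
    ∀ i j : ℕ, 1 ≤ i → i ≤ n ^ 2 / 2 → j ≤ 1 →
      LinearIndependent k
        (fun p : Fin (n ^ 2) ⊕ Fin (n ^ 2) =>
          Sum.elim (fun l : Fin (n ^ 2) => E k n q ^ (l : ℕ) * alpha k n q i j)
            (fun l : Fin (n ^ 2) => E k n q ^ (l : ℕ) * gam k n q i j) p) := by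
  exact fun i j hi hin hj => statement5_general h4 hq hi hin hj
end
end

section
/- For every 1 ≤ i ≤ n²/2 and j ∈ {0,1}, the element E^{n²−1}·α_{2i,j}·E^{n²−2i} of u is nonzero. -/
noncomputable section

open scoped TensorProduct

/-!
Let `N = n²` and `G = K⁻¹K̂`. The relations give the commutation formula
`F^(s+1) E = q^(-s-1) E F^(s+1) + (s+1)_{q⁻¹} F^s (1 - q^s G)`. Multiplied on the left by `E^(N-1)`,
the first summand dies, so on a `G`-eigenvector `w` of eigenvalue `q^(-2i)` the operator
`E^(N-1) F^(N-1) E^(N-2i)` is a nonzero multiple of `E^(N-1) F^(2i-1)`: the scalars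
`(s+1)_{q⁻¹} (1 - q^(-m-1))` met on the way do not vanish, because `q` is a primitive `N`-th root of
unity. It remains to find such a `w` with `E^(N-1) F^(2i-1) w ≠ 0` and `e_{2i,j}` fixing
`E^(N-2i) w`; the cyclic vector of the module induced from a character of `k[K, K̂]` will do.
-/

namespace QFL

open Finset

section Gauss

variable {k : Type} [Field k] {x : k} {N s : ℕ}

theorem gauss_succ (x : k) (s : ℕ) : gauss k x (s + 1) = gauss k x s + x ^ s :=
  sum_range_succ _ _

theorem one_sub_mul_gauss (x : k) (s : ℕ) : (1 - x) * gauss k x s = 1 - x ^ s :=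
  mul_neg_geom_sum x s

theorem gauss_eq_zero (hx : IsPrimitiveRoot x N) (hN : 1 < N) : gauss k x N = 0 :=
  hx.geom_sum_eq_zero hN

theorem gauss_ne_zero (hx : IsPrimitiveRoot x N) (hs : s ≠ 0) (hsN : s < N) :
    gauss k x s ≠ 0 := by
  intro h
  have hpow := one_sub_mul_gauss x s
  rw [h, mul_zero] at hpow
  exact hx.pow_ne_one_of_pos_of_lt hs hsN (sub_eq_zero.mp hpow.symm).symm

end Gauss

section Commutation

theorem mul_mul_pow_pred {R B : Type*} [Monoid B] [SMul R B] [IsScalarTower R B B] {c : R}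
    {f T : B} {m : ℕ} (h : f * T = c • (T * f)) (hm : m ≠ 0) (hf : f ^ m = 1) :
    f * T * f ^ (m - 1) = c • T := by
  rw [h, smul_mul_assoc, mul_assoc, mul_pow_sub_one hm, hf, mul_one]

theorem mul_pow_eq_smul {R B : Type*} [Monoid R] [Monoid B] [MulAction R B] [IsScalarTower R B B]
    [SMulCommClass R B B] {c : R} {G F : B} (h : G * F = c • (F * G)) (s : ℕ) :
    G * F ^ s = c ^ s • (F ^ s * G) := by
  induction s with
  | zero => simp
  | succ s ih =>
    rw [pow_succ, ← mul_assoc, ih, smul_mul_assoc, mul_assoc, h, mul_smul_comm, smul_smul,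
      ← pow_succ, mul_assoc]

theorem pow_apply_of_apply_eq_smul {R M : Type*} [CommSemiring R] [AddCommMonoid M] [Module R M]
    {f : Module.End R M} {v : M} {x : R} (h : f v = x • v) (t : ℕ) : (f ^ t) v = x ^ t • v := by
  induction t with
  | zero => simp
  | succ t ih => rw [pow_succ, Module.End.mul_apply, h, map_smul, ih, smul_smul, pow_succ']

variable {k : Type} [Field k] {q : k} {A : Type*} [Ring A] [Algebra k A] {E F G : A}

theorem pow_succ_mul_eq (hq : q ≠ 0) (hFE : F * E = q⁻¹ • (E * F) + (1 - G))
    (hGF : G * F = q ^ 2 • (F * G)) (s : ℕ) :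
    F ^ (s + 1) * E = q⁻¹ ^ (s + 1) • (E * F ^ (s + 1))
      + gauss k q⁻¹ (s + 1) • (F ^ s * (1 - q ^ s • G)) := by
  induction s with
  | zero => simp [hFE, gauss]
  | succ s ih =>
    have hGFs := mul_pow_eq_smul hGF (s + 1)
    have hcoeff : q⁻¹ ^ (s + 1) * (q ^ 2) ^ (s + 1) + gauss k q⁻¹ (s + 1) * q ^ s
        = gauss k q⁻¹ (s + 1 + 1) * q ^ (s + 1) := by
      have hgauss := one_sub_mul_gauss q⁻¹ (s + 1)
      have hpow : q⁻¹ ^ (s + 1) * q ^ (s + 1) = 1 := by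
        rw [← mul_pow, inv_mul_cancel₀ hq, one_pow]
      have hinv : q⁻¹ * q = 1 := inv_mul_cancel₀ hq
      rw [gauss_succ _ (s + 1)]
      linear_combination (-q ^ (s + 1)) * hgauss + q ^ (s + 1) * hpow
        - gauss k q⁻¹ (s + 1) * q ^ s * hinv
    calc F ^ (s + 1 + 1) * E = F * (F ^ (s + 1) * E) := by rw [pow_succ', mul_assoc]
      _ = q⁻¹ ^ (s + 1) • (F * E * F ^ (s + 1))
          + gauss k q⁻¹ (s + 1) • (F ^ (s + 1) * (1 - q ^ s • G)) := by
        rw [ih, mul_add, mul_smul_comm, mul_smul_comm, ← mul_assoc, ← mul_assoc, ← pow_succ']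
      _ = q⁻¹ ^ (s + 1 + 1) • (E * F ^ (s + 1 + 1))
          + (q⁻¹ ^ (s + 1) + gauss k q⁻¹ (s + 1)) • F ^ (s + 1)
          - (q⁻¹ ^ (s + 1) * (q ^ 2) ^ (s + 1) + gauss k q⁻¹ (s + 1) * q ^ s)
            • (F ^ (s + 1) * G) := by
        rw [hFE, add_mul, sub_mul, one_mul, hGFs, smul_mul_assoc, mul_assoc E, ← pow_succ',
          pow_succ q⁻¹ (s + 1), mul_sub, mul_one, mul_smul_comm]
        module
      _ = _ := by
        rw [hcoeff, gauss_succ _ (s + 1), mul_sub, mul_one, mul_smul_comm]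
        module

theorem commute_pow_of_isPrimitiveRoot {N : ℕ} (hq : IsPrimitiveRoot q N) (hN : 1 < N)
    (hFE : F * E = q⁻¹ • (E * F) + (1 - G)) (hGF : G * F = q ^ 2 • (F * G)) :
    Commute (F ^ N) E := by
  have h := pow_succ_mul_eq (hq.ne_zero (by omega)) hFE hGF (N - 1)
  rwa [Nat.sub_add_cancel hN.le, hq.inv.pow_eq_one, gauss_eq_zero hq.inv hN, one_smul, zero_smul,
    add_zero] at h

theorem pow_pred_pow_pow_apply_ne_zero {M : Type*} [AddCommGroup M] [Module k M]
    {E F G : Module.End k M} {N : ℕ} (hq : IsPrimitiveRoot q N)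
    (hFE : F * E = q⁻¹ • (E * F) + (1 - G)) (hGE : G * E = (q ^ 2)⁻¹ • (E * G))
    (hGF : G * F = q ^ 2 • (F * G)) (hE : E ^ N = 0) {w : M} {s m : ℕ}
    (hw : G w = q⁻¹ ^ (s + 1) • w) (hsm : s + 1 + m ≤ N)
    (h0 : (E ^ (N - 1)) ((F ^ s) w) ≠ 0) :
    (E ^ (N - 1)) ((F ^ (s + m)) ((E ^ m) w)) ≠ 0 := by
  have hq0 : q ≠ 0 := hq.ne_zero (by omega)
  induction m with
  | zero => exact h0
  | succ m ih =>
    have hkill (v : M) : (E ^ (N - 1)) (E v) = 0 := by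
      rw [← Module.End.mul_apply, pow_sub_one_mul (by omega), hE, LinearMap.zero_apply]
    have hpow : q ^ (s + m) * (q ^ 2)⁻¹ ^ m * q⁻¹ ^ (s + 1) = q⁻¹ ^ (m + 1) := by
      calc _ = (q * q⁻¹) ^ (s + m) * q⁻¹ ^ (m + 1) := by rw [← inv_pow]; ring
        _ = _ := by rw [mul_inv_cancel₀ hq0, one_pow, one_mul]
    have hweight : (q ^ (s + m) • G) ((E ^ m) w) = q⁻¹ ^ (m + 1) • (E ^ m) w := by
      rw [LinearMap.smul_apply, ← Module.End.mul_apply, mul_pow_eq_smul hGE, LinearMap.smul_apply,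
        Module.End.mul_apply, hw, map_smul, smul_smul, smul_smul, hpow]
    have hstep : (E ^ (N - 1)) ((F ^ (s + m + 1)) ((E ^ (m + 1)) w))
        = (gauss k q⁻¹ (s + m + 1) * (1 - q⁻¹ ^ (m + 1)))
          • (E ^ (N - 1)) ((F ^ (s + m)) ((E ^ m) w)) := by
      rw [pow_succ' E m, Module.End.mul_apply, ← Module.End.mul_apply (F ^ (s + m + 1)),
        pow_succ_mul_eq hq0 hFE hGF, LinearMap.add_apply, LinearMap.smul_apply,
        LinearMap.smul_apply, Module.End.mul_apply, Module.End.mul_apply, LinearMap.sub_apply,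
        hweight, Module.End.one_apply, map_add, map_smul, map_smul, hkill, smul_zero, zero_add,
        mul_smul, sub_smul, one_smul, map_sub, map_smul, map_sub, map_smul]
    have hroot : q⁻¹ ^ (m + 1) ≠ 1 :=
      hq.inv.pow_ne_one_of_pos_of_lt m.succ_ne_zero (by omega)
    rw [← add_assoc, hstep]
    exact smul_ne_zero
      (mul_ne_zero (gauss_ne_zero hq.inv (by omega) (by omega)) (sub_ne_zero.2 hroot.symm))
      (ih (by omega))

end Commutation

section InducedModule

variable (k : Type) [Field k] (N : ℕ)

/-- The underlying space of the `ũ_q(sl₂)`-module induced from a character of `k[K, K̂]`, with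
`N = n²`: the coordinate at `(a, b)` is that of `E^a F^b w`, for `w` the cyclic vector. -/
abbrev InducedSpace := Fin N × Fin N → k

/-- The vector `E^a F^b w` of the induced module; it is zero as soon as `a` or `b` reaches `N`. -/
def monomial (a b : ℕ) : InducedSpace k N :=
  if h : a < N ∧ b < N then Pi.single (⟨a, h.1⟩, ⟨b, h.2⟩) 1 else 0

/-- The operator with `E^a F^b w ↦ f a b` for all `a, b < N`. -/
def ofMonomial (f : ℕ → ℕ → InducedSpace k N) : Module.End k (InducedSpace k N) :=
  Fintype.linearCombination k fun p : Fin N × Fin N => f p.1 p.2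

variable {k N}

theorem monomial_ne_zero {a b : ℕ} (ha : a < N) (hb : b < N) : monomial k N a b ≠ 0 := by
  simp [monomial, ha, hb]

theorem monomial_eq_zero {a b : ℕ} (h : N ≤ a ∨ N ≤ b) : monomial k N a b = 0 :=
  dif_neg (by omega)

theorem ofMonomial_monomial {f : ℕ → ℕ → InducedSpace k N}
    (hf : ∀ a b, N ≤ a ∨ N ≤ b → f a b = 0) (a b : ℕ) :
    ofMonomial k N f (monomial k N a b) = f a b := by
  by_cases h : a < N ∧ b < N
  · simp [ofMonomial, monomial, h, Fintype.linearCombination_apply_single]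
  · have h' : N ≤ a ∨ N ≤ b := by omega
    rw [hf a b h', monomial_eq_zero h', map_zero]

theorem ext_monomial {f g : Module.End k (InducedSpace k N)}
    (h : ∀ a b, f (monomial k N a b) = g (monomial k N a b)) : f = g := by
  refine LinearMap.pi_ext' fun p => LinearMap.ext_ring ?_
  simpa [monomial] using h p.1 p.2

variable (N)

/-- The action of an element of `⟨K, K̂⟩` which has eigenvalue `μ` on the cyclic vector and
`c`-commutes with `E`, hence `c⁻¹`-commutes with `F`. -/
def weightOp (μ c : k) : Module.End k (InducedSpace k N) :=
  ofMonomial k N fun a b => (μ * c ^ a * c⁻¹ ^ b) • monomial k N a b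

variable (k) in
/-- The action of `E`. -/
def raise : Module.End k (InducedSpace k N) :=
  ofMonomial k N fun a b => monomial k N (a + 1) b

/-- The scalar by which `F E^a - q^(-a) E^a F` sends `F^b w` to `E^(a-1) F^b w`, where `l` is the
eigenvalue of `K⁻¹K̂` on `w`. -/
def lowerCoeff (q l : k) (a b : ℕ) : k :=
  gauss k q⁻¹ a * (1 - l * q ^ (2 * b + 1) * q⁻¹ ^ a)

/-- The action of `F`. For `a = 0` the truncated index `a - 1` is harmless, since the coefficient
in front of it is zero. -/
def lower (q l : k) : Module.End k (InducedSpace k N) :=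
  ofMonomial k N fun a b =>
    q⁻¹ ^ a • monomial k N a (b + 1) + lowerCoeff q l a b • monomial k N (a - 1) b

variable {N}

theorem weightOp_monomial (μ c : k) (a b : ℕ) :
    weightOp N μ c (monomial k N a b) = (μ * c ^ a * c⁻¹ ^ b) • monomial k N a b :=
  ofMonomial_monomial (fun a b h => by rw [monomial_eq_zero h, smul_zero]) a b

theorem raise_monomial (a b : ℕ) : raise k N (monomial k N a b) = monomial k N (a + 1) b :=
  ofMonomial_monomial (fun a b h => monomial_eq_zero (by omega)) a b

theorem raise_pow_monomial (t a b : ℕ) :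
    (raise k N ^ t) (monomial k N a b) = monomial k N (a + t) b := by
  induction t with
  | zero => simp
  | succ t ih => rw [pow_succ', Module.End.mul_apply, ih, raise_monomial, add_assoc]

theorem lowerCoeff_zero (q l : k) (b : ℕ) : lowerCoeff q l 0 b = 0 := by
  simp [lowerCoeff, gauss]

theorem lowerCoeff_succ {q : k} (hq : q ≠ 0) (l : k) (a b : ℕ) :
    lowerCoeff q l (a + 1) b
      = q⁻¹ * lowerCoeff q l a b + (1 - l * (q ^ 2)⁻¹ ^ a * (q ^ 2) ^ b) := by
  have hgauss := one_sub_mul_gauss q⁻¹ a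
  have hinv : q⁻¹ * q = 1 := inv_mul_cancel₀ hq
  have hsq : (q ^ 2)⁻¹ ^ a = q⁻¹ ^ a * q⁻¹ ^ a := by rw [← mul_pow, ← sq, ← inv_pow]
  rw [lowerCoeff, lowerCoeff, gauss_succ, hsq]
  linear_combination hgauss - l * (q ^ 2) ^ b * q⁻¹ ^ a * q⁻¹ ^ a * hinv

theorem lower_monomial {q : k} (hg : gauss k q⁻¹ N = 0) (l : k) (a b : ℕ) :
    lower N q l (monomial k N a b)
      = q⁻¹ ^ a • monomial k N a (b + 1) + lowerCoeff q l a b • monomial k N (a - 1) b := by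
  refine ofMonomial_monomial (fun a b h => ?_) a b
  have hfst : monomial k N a (b + 1) = 0 := monomial_eq_zero (by omega)
  rw [hfst, smul_zero, zero_add]
  rcases eq_or_ne a N with rfl | ha
  · rw [lowerCoeff, hg, zero_mul, zero_smul]
  · rcases Nat.eq_zero_or_pos a with rfl | hpos
    · rw [lowerCoeff_zero, zero_smul]
    · rw [monomial_eq_zero (by omega), smul_zero]

theorem lower_pow_monomial {q : k} (hg : gauss k q⁻¹ N = 0) (l : k) (t b : ℕ) :
    (lower N q l ^ t) (monomial k N 0 b) = monomial k N 0 (b + t) := by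
  induction t with
  | zero => simp
  | succ t ih =>
    rw [pow_succ', Module.End.mul_apply, ih, lower_monomial hg, lowerCoeff_zero, pow_zero,
      one_smul, zero_smul, add_zero, add_assoc]

theorem weightOp_mul (μ ν c d : k) :
    weightOp N μ c * weightOp N ν d = weightOp N (μ * ν) (c * d) := by
  refine ext_monomial fun a b => ?_
  rw [Module.End.mul_apply, weightOp_monomial, map_smul, weightOp_monomial, weightOp_monomial,
    smul_smul, mul_inv, mul_pow, mul_pow]
  congr 1
  ring

theorem weightOp_one : weightOp N (1 : k) 1 = 1 :=
  ext_monomial fun a b => by simp [weightOp_monomial]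

theorem weightOp_pow (μ c : k) (t : ℕ) : weightOp N μ c ^ t = weightOp N (μ ^ t) (c ^ t) := by
  induction t with
  | zero => simp only [pow_zero, weightOp_one]
  | succ t ih => rw [pow_succ, ih, weightOp_mul, pow_succ, pow_succ]

theorem weightOp_mul_raise (μ c : k) :
    weightOp N μ c * raise k N = c • (raise k N * weightOp N μ c) := by
  refine ext_monomial fun a b => ?_
  simp only [LinearMap.smul_apply, Module.End.mul_apply, raise_monomial, weightOp_monomial,
    map_smul, smul_smul]
  congr 1
  ring

theorem weightOp_mul_lower {q c : k} (hg : gauss k q⁻¹ N = 0) (hc : c ≠ 0) (l μ : k) :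
    weightOp N μ c * lower N q l = c⁻¹ • (lower N q l * weightOp N μ c) := by
  refine ext_monomial fun a b => ?_
  simp only [LinearMap.smul_apply, Module.End.mul_apply, lower_monomial hg, weightOp_monomial,
    map_smul, map_add, smul_add, smul_smul]
  congr 2
  · ring
  · rcases a with _ | a
    · simp only [lowerCoeff_zero, zero_mul, mul_zero]
    · rw [add_tsub_cancel_right]
      field_simp
      ring

theorem weightOp_sq_inv_mul_lower {q : k} (hq : q ≠ 0) (hg : gauss k q⁻¹ N = 0) (l : k) :
    weightOp N l (q ^ 2)⁻¹ * lower N q l = q ^ 2 • (lower N q l * weightOp N l (q ^ 2)⁻¹) := by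
  rw [weightOp_mul_lower hg (inv_ne_zero (pow_ne_zero 2 hq)), inv_inv]

theorem lower_mul_raise {q : k} (hq : q ≠ 0) (hg : gauss k q⁻¹ N = 0) (l : k) :
    lower N q l * raise k N
      = q⁻¹ • (raise k N * lower N q l) + (1 - weightOp N l (q ^ 2)⁻¹) := by
  refine ext_monomial fun a b => ?_
  have hpred : lowerCoeff q l a b • monomial k N (a - 1 + 1) b
      = lowerCoeff q l a b • monomial k N a b := by
    rcases a with _ | a
    · simp only [lowerCoeff_zero, zero_smul]
    · rw [add_tsub_cancel_right]
  simp only [LinearMap.add_apply, LinearMap.sub_apply, LinearMap.smul_apply, Module.End.mul_apply,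
    Module.End.one_apply, raise_monomial, lower_monomial hg, weightOp_monomial, map_add, map_smul,
    hpred, add_tsub_cancel_right, lowerCoeff_succ hq, inv_inv]
  module

theorem raise_pow_eq_zero : raise k N ^ N = 0 :=
  ext_monomial fun a b => by
    rw [raise_pow_monomial, monomial_eq_zero (by omega), LinearMap.zero_apply]

theorem lower_pow_eq_zero {q : k} (hq : IsPrimitiveRoot q N) (hN : 1 < N) (l : k) :
    lower N q l ^ N = 0 := by
  have hq0 : q ≠ 0 := hq.ne_zero (by omega)
  have hg := gauss_eq_zero hq.inv hN
  have hcomm : Commute (lower N q l ^ N) (raise k N) :=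
    commute_pow_of_isPrimitiveRoot hq hN (lower_mul_raise hq0 hg l)
      (weightOp_sq_inv_mul_lower hq0 hg l)
  refine ext_monomial fun a b => ?_
  rw [← zero_add a, ← raise_pow_monomial, ← Module.End.mul_apply, (hcomm.pow_right a).eq,
    Module.End.mul_apply, lower_pow_monomial hg, monomial_eq_zero (by omega), map_zero,
    LinearMap.zero_apply]

end InducedModule

section Representation

variable {k : Type} [Field k] {n : ℕ} {q κ l : k}

variable (n q κ l) in
/-- The action of the generators `K, K̂, E, F` (in this order) on the module induced from the
character with `w ↦ κ w` under `K` and `w ↦ l w` under `K⁻¹K̂`. -/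
def inducedGenerators : Fin 4 → Module.End k (InducedSpace k (n ^ 2)) :=
  ![weightOp (n ^ 2) κ (q ^ n), weightOp (n ^ 2) (κ * l) (q ^ n * (q ^ 2)⁻¹), raise k (n ^ 2),
    lower (n ^ 2) q l]

theorem inducedGenerators_zero : inducedGenerators n q κ l 0 = weightOp (n ^ 2) κ (q ^ n) := rfl

theorem inducedGenerators_one :
    inducedGenerators n q κ l 1 = weightOp (n ^ 2) (κ * l) (q ^ n * (q ^ 2)⁻¹) := rfl

theorem inducedGenerators_two : inducedGenerators n q κ l 2 = raise k (n ^ 2) := rfl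

theorem inducedGenerators_three : inducedGenerators n q κ l 3 = lower (n ^ 2) q l := rfl

theorem mul_pow_eq_pow_pred_sq {B : Type*} [CommMonoid B] {κ l : B} {n : ℕ} (hn : n ≠ 0)
    (hκ : κ ^ n = 1) (hκl : κ ^ 2 * l ^ n = 1) : (κ * l) ^ n = (κ ^ (n - 1)) ^ 2 := by
  calc (κ * l) ^ n = (κ ^ (n - 1) * κ) ^ 2 * l ^ n := by
        rw [pow_sub_one_mul hn, mul_pow, hκ, one_pow]
    _ = (κ ^ (n - 1)) ^ 2 := by rw [mul_pow, mul_assoc, hκl, mul_one]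

theorem weightOp_pow_eq_one (hq : q ^ n ^ 2 = 1) (hκ : κ ^ n = 1) :
    weightOp (n ^ 2) κ (q ^ n) ^ n = 1 := by
  rw [weightOp_pow, hκ, ← pow_mul, ← sq, hq, weightOp_one]

theorem weightOp_mul_pow (hn : n ≠ 0) (hq : IsPrimitiveRoot q (n ^ 2)) (hκ : κ ^ n = 1)
    (hκl : κ ^ 2 * l ^ n = 1) :
    weightOp (n ^ 2) (κ * l) (q ^ n * (q ^ 2)⁻¹) ^ n
      = (weightOp (n ^ 2) κ (q ^ n) ^ (n - 1)) ^ 2 := by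
  have hq0 : q ≠ 0 := hq.ne_zero (pow_ne_zero 2 hn)
  have hqn : (q ^ n) ^ n = 1 := by rw [← pow_mul, ← sq, hq.pow_eq_one]
  have hqn2 : (q ^ n) ^ 2 * (q ^ 2)⁻¹ ^ n = 1 := by
    rw [pow_right_comm, ← mul_pow, mul_inv_cancel₀ (pow_ne_zero 2 hq0), one_pow]
  rw [weightOp_pow, weightOp_pow, weightOp_pow, mul_pow_eq_pow_pred_sq hn hκ hκl,
    mul_pow_eq_pow_pred_sq hn hqn hqn2]

theorem weightOp_mul_pow_sq (hn : n ≠ 0) (hq : IsPrimitiveRoot q (n ^ 2)) (hκ : κ ^ n = 1)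
    (hκl : κ ^ 2 * l ^ n = 1) :
    weightOp (n ^ 2) (κ * l) (q ^ n * (q ^ 2)⁻¹) ^ n ^ 2 = 1 := by
  calc _ = (weightOp (n ^ 2) (κ * l) (q ^ n * (q ^ 2)⁻¹) ^ n) ^ n := by rw [← pow_mul, ← sq]
    _ = ((weightOp (n ^ 2) κ (q ^ n) ^ n) ^ (n - 1)) ^ 2 := by
      rw [weightOp_mul_pow hn hq hκ hκl, pow_right_comm, pow_right_comm _ (n - 1)]
    _ = 1 := by rw [weightOp_pow_eq_one hq.pow_eq_one hκ, one_pow, one_pow]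

theorem weightOp_pow_pred_mul (hn : n ≠ 0) (hq : q ^ n ^ 2 = 1) (hκ : κ ^ n = 1) :
    weightOp (n ^ 2) κ (q ^ n) ^ (n - 1) * weightOp (n ^ 2) (κ * l) (q ^ n * (q ^ 2)⁻¹)
      = weightOp (n ^ 2) l (q ^ 2)⁻¹ := by
  rw [weightOp_pow, weightOp_mul, ← mul_assoc, ← mul_assoc, pow_sub_one_mul hn,
    pow_sub_one_mul hn, hκ, ← pow_mul, ← sq, hq, one_mul, one_mul]

theorem lift_inducedGenerators_eq_of_rel (hn : 1 < n) (hq : IsPrimitiveRoot q (n ^ 2))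
    (hκ : κ ^ n = 1) (hκl : κ ^ 2 * l ^ n = 1) {x y : FreeAlgebra k (Fin 4)} (h : Rel k n q x y) :
    FreeAlgebra.lift k (inducedGenerators n q κ l) x
      = FreeAlgebra.lift k (inducedGenerators n q κ l) y := by
  have hn0 : n ≠ 0 := by omega
  have hN : 1 < n ^ 2 := Nat.one_lt_pow two_ne_zero hn
  have hq0 : q ≠ 0 := hq.ne_zero (by omega)
  have hg := gauss_eq_zero hq.inv hN
  have hqn0 : q ^ n ≠ 0 := pow_ne_zero n hq0
  have hK := weightOp_pow_eq_one hq.pow_eq_one hκ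
  have hKh := weightOp_mul_pow hn0 hq hκ hκl
  have hKh' := weightOp_mul_pow_sq hn0 hq hκ hκl
  cases h <;> simp only [map_pow, map_mul, map_sub, map_smul, map_one, map_zero,
    FreeAlgebra.lift_ι_apply, inducedGenerators_zero, inducedGenerators_one,
    inducedGenerators_two, inducedGenerators_three]
  case Kord => exact hK
  case Khord => exact hKh
  case KKh => rw [weightOp_mul, weightOp_mul, mul_comm κ, mul_comm (q ^ n)]
  case KE => exact mul_mul_pow_pred (weightOp_mul_raise _ _) hn0 hK
  case KF => exact mul_mul_pow_pred (weightOp_mul_lower hg hqn0 _ _) hn0 hK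
  case KhE => exact mul_mul_pow_pred (weightOp_mul_raise _ _) (by omega) hKh'
  case KhF =>
    refine mul_mul_pow_pred ?_ (by omega) hKh'
    rw [weightOp_mul_lower hg (mul_ne_zero hqn0 (inv_ne_zero (pow_ne_zero 2 hq0))), mul_inv,
      inv_inv]
  case Enil => exact raise_pow_eq_zero
  case Fnil => exact lower_pow_eq_zero hq hN l
  case EF =>
    rw [weightOp_pow_pred_mul hn0 hq.pow_eq_one hκ, lower_mul_raise hq0 hg, add_sub_cancel_left]

/-- The module induced from the character of `k[K, K̂]` given by `K ↦ κ` and `K⁻¹K̂ ↦ l`. -/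
def inducedRep (hn : 1 < n) (hq : IsPrimitiveRoot q (n ^ 2)) (hκ : κ ^ n = 1)
    (hκl : κ ^ 2 * l ^ n = 1) : U k n q →ₐ[k] Module.End k (InducedSpace k (n ^ 2)) :=
  RingQuot.liftAlgHom k ⟨FreeAlgebra.lift k (inducedGenerators n q κ l),
    fun _ _ => lift_inducedGenerators_eq_of_rel hn hq hκ hκl⟩

theorem inducedRep_K (hn : 1 < n) (hq : IsPrimitiveRoot q (n ^ 2)) (hκ : κ ^ n = 1)
    (hκl : κ ^ 2 * l ^ n = 1) :
    inducedRep hn hq hκ hκl (K k n q) = weightOp (n ^ 2) κ (q ^ n) := by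
  rw [inducedRep, K, RingQuot.liftAlgHom_mkAlgHom_apply, FreeAlgebra.lift_ι_apply,
    inducedGenerators_zero]

theorem inducedRep_Kh (hn : 1 < n) (hq : IsPrimitiveRoot q (n ^ 2)) (hκ : κ ^ n = 1)
    (hκl : κ ^ 2 * l ^ n = 1) :
    inducedRep hn hq hκ hκl (Kh k n q) = weightOp (n ^ 2) (κ * l) (q ^ n * (q ^ 2)⁻¹) := by
  rw [inducedRep, Kh, RingQuot.liftAlgHom_mkAlgHom_apply, FreeAlgebra.lift_ι_apply,
    inducedGenerators_one]

theorem inducedRep_E (hn : 1 < n) (hq : IsPrimitiveRoot q (n ^ 2)) (hκ : κ ^ n = 1)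
    (hκl : κ ^ 2 * l ^ n = 1) : inducedRep hn hq hκ hκl (E k n q) = raise k (n ^ 2) := by
  rw [inducedRep, E, RingQuot.liftAlgHom_mkAlgHom_apply, FreeAlgebra.lift_ι_apply,
    inducedGenerators_two]

theorem inducedRep_F (hn : 1 < n) (hq : IsPrimitiveRoot q (n ^ 2)) (hκ : κ ^ n = 1)
    (hκl : κ ^ 2 * l ^ n = 1) : inducedRep hn hq hκ hκl (F k n q) = lower (n ^ 2) q l := by
  rw [inducedRep, F, RingQuot.liftAlgHom_mkAlgHom_apply, FreeAlgebra.lift_ι_apply,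
    inducedGenerators_three]

theorem raise_pow_lower_pow_monomial_ne_zero {N : ℕ} (hq : IsPrimitiveRoot q N) (hN : 1 < N)
    {s m : ℕ} (hl : l = q⁻¹ ^ (s + 1)) (hsm : s + 1 + m ≤ N) :
    (raise k N ^ (N - 1)) ((lower N q l ^ (s + m)) (monomial k N m 0)) ≠ 0 := by
  have hq0 : q ≠ 0 := hq.ne_zero (by omega)
  have hg := gauss_eq_zero hq.inv hN
  have hw : weightOp N l (q ^ 2)⁻¹ (monomial k N 0 0) = q⁻¹ ^ (s + 1) • monomial k N 0 0 := by
    rw [weightOp_monomial, pow_zero, pow_zero, mul_one, mul_one, hl]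
  have htop : (raise k N ^ (N - 1)) ((lower N q l ^ s) (monomial k N 0 0)) ≠ 0 := by
    rw [lower_pow_monomial hg, raise_pow_monomial]
    exact monomial_ne_zero (by omega) (by omega)
  have h := pow_pred_pow_pow_apply_ne_zero hq (lower_mul_raise hq0 hg l) (weightOp_mul_raise _ _)
    (weightOp_sq_inv_mul_lower hq0 hg l) raise_pow_eq_zero hw hsm htop
  rwa [raise_pow_monomial, zero_add] at h

end Representation

section Idempotent

variable {k : Type} [Field k] {n : ℕ} {q : k} {M : Type*} [AddCommGroup M] [Module k M]
  (ρ : U k n q →ₐ[k] Module.End k M) {v : M} {i j : ℕ}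

theorem phi_apply (hn : Even n) (hnk : (n : k) ≠ 0) (hq : q ≠ 0)
    (hG : ρ (Kinv k n q * Kh k n q) v = q ^ (2 * i) • v) : ρ (phi k n q i) v = v := by
  have hterm (t : ℕ) : (q⁻¹ ^ (2 * i * t)) • (ρ (Kinv k n q * Kh k n q) ^ t) v = v := by
    rw [pow_apply_of_apply_eq_smul hG, smul_smul, ← pow_mul, ← mul_pow, inv_mul_cancel₀ hq,
      one_pow, one_smul]
  have hcard : (2 : k) * ((n ^ 2 / 2 : ℕ) : k) = (n : k) ^ 2 := by
    rw [← Nat.cast_ofNat, ← Nat.cast_mul,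
      Nat.mul_div_cancel' (hn.pow_of_ne_zero two_ne_zero).two_dvd, Nat.cast_pow]
  simp only [phi, map_smul, map_sum, map_pow, LinearMap.smul_apply, LinearMap.sum_apply, hterm,
    sum_const, card_range]
  rw [← Nat.cast_smul_eq_nsmul k, smul_smul, mul_assoc, hcard,
    inv_mul_cancel₀ (pow_ne_zero 2 hnk), one_smul]

theorem oneJ_apply (h2 : (2 : k) ≠ 0) (hj : j ≤ 1)
    (hv : ρ (K k n q * Kh k n q ^ (n / 2)) v = (-1 : k) ^ j • v) : ρ (oneJ k n q j) v = v := by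
  have hhalf : (2 : k)⁻¹ • (v + v) = v := by
    rw [← two_smul k, smul_smul, inv_mul_cancel₀ h2, one_smul]
  obtain rfl | rfl : j = 0 ∨ j = 1 := by omega
  · rw [oneJ, if_pos rfl, map_smul, map_add, map_one, LinearMap.smul_apply, LinearMap.add_apply,
      hv, Module.End.one_apply, pow_zero, one_smul, hhalf]
  · rw [oneJ, if_neg one_ne_zero, map_smul, map_sub, map_one, LinearMap.smul_apply,
      LinearMap.sub_apply, hv, Module.End.one_apply, pow_one, neg_one_smul, sub_neg_eq_add, hhalf]

theorem eIdem_apply (hn : Even n) (hnk : (n : k) ≠ 0) (hq : q ≠ 0) (hj : j ≤ 1) {x : k}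
    (hx : x ^ n = 1) (hxj : x * (x * q ^ (2 * i)) ^ (n / 2) = (-1) ^ j)
    (hK : ρ (K k n q) v = x • v) (hKh : ρ (Kh k n q) v = (x * q ^ (2 * i)) • v) :
    ρ (eIdem k n q i j) v = v := by
  have hn0 : n ≠ 0 := by
    rintro rfl
    exact hnk Nat.cast_zero
  have h2 : (2 : k) ≠ 0 := by
    obtain ⟨p, rfl⟩ := hn.two_dvd
    rw [Nat.cast_mul] at hnk
    exact_mod_cast left_ne_zero_of_mul hnk
  have hG : ρ (Kinv k n q * Kh k n q) v = q ^ (2 * i) • v := by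
    rw [map_mul, Kinv, map_pow, Module.End.mul_apply, hKh, map_smul,
      pow_apply_of_apply_eq_smul hK, smul_smul, mul_right_comm, mul_pow_sub_one hn0, hx, one_mul]
  have hKKh : ρ (K k n q * Kh k n q ^ (n / 2)) v = (-1 : k) ^ j • v := by
    rw [map_mul, map_pow, Module.End.mul_apply, pow_apply_of_apply_eq_smul hKh, map_smul, hK,
      smul_smul, mul_comm, hxj]
  rw [eIdem, map_mul, Module.End.mul_apply, oneJ_apply ρ h2 hj hKKh, phi_apply ρ hn hnk hq hG]

theorem exists_eigenvalue (hn : n ≠ 0) (h4 : 4 ∣ n) (hq : IsPrimitiveRoot q (n ^ 2)) (i j : ℕ) :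
    ∃ x : k, x ^ n = 1 ∧ x ^ 2 * (q ^ (2 * i)) ^ n = 1
      ∧ x * (x * q ^ (2 * i)) ^ (n / 2) = (-1) ^ j := by
  obtain ⟨p, rfl⟩ := h4
  have hinv : q⁻¹ * q = 1 := inv_mul_cancel₀ (hq.ne_zero (pow_ne_zero 2 hn))
  have hsign (t : ℕ) : ((-1 : k) ^ (i + j)) ^ (2 * t) = 1 := by
    rw [← pow_mul, mul_left_comm, pow_mul, neg_one_sq, one_pow]
  have hhalf : q⁻¹ ^ (8 * p ^ 2) = -1 :=
    (hq.inv.pow (Nat.pos_of_ne_zero (pow_ne_zero 2 hn)) (by ring)).eq_neg_one_of_two_right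
  refine ⟨(-1) ^ (i + j) * q⁻¹ ^ (i * (4 * p)), ?_, ?_, ?_⟩
  · calc _ = ((-1 : k) ^ (i + j)) ^ (2 * (2 * p)) * (q⁻¹ ^ (4 * p) ^ 2) ^ i := by ring
      _ = 1 := by rw [hsign, hq.inv.pow_eq_one, one_pow, one_mul]
  · calc _ = ((-1 : k) ^ (i + j)) ^ (2 * 1) * (q⁻¹ * q) ^ (2 * i * (4 * p)) := by ring
      _ = 1 := by rw [hsign, hinv, one_pow, one_mul]
  · rw [show 4 * p / 2 = 2 * p by omega]
    calc _ = ((-1 : k) ^ (i + j)) ^ (2 * p) * (q⁻¹ * q) ^ (i * (4 * p))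
          * ((-1) ^ (i + j) * (q⁻¹ ^ (8 * p ^ 2)) ^ i) := by ring
      _ = (-1) ^ (2 * i) * (-1) ^ j := by
        rw [hsign, hinv, hhalf, one_pow, one_mul, one_mul]
        ring
      _ = (-1) ^ j := by rw [pow_mul, neg_one_sq, one_pow, one_mul]

theorem exists_inducedRep_eIdem_apply (hn : 1 < n) (h4 : 4 ∣ n) (hq : IsPrimitiveRoot q (n ^ 2))
    (hi : 2 * i ≤ n ^ 2) (hj : j ≤ 1) :
    ∃ (κ : k) (hκ : κ ^ n = 1) (hκl : κ ^ 2 * (q⁻¹ ^ (2 * i)) ^ n = 1),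
      inducedRep hn hq hκ hκl (eIdem k n q i j) (monomial k (n ^ 2) (n ^ 2 - 2 * i) 0)
        = monomial k (n ^ 2) (n ^ 2 - 2 * i) 0 := by
  have hn0 : n ≠ 0 := by omega
  have hnk : (n : k) ≠ 0 := by
    have : NeZero (n ^ 2) := ⟨pow_ne_zero 2 hn0⟩
    have := hq.neZero'.out
    rw [Nat.cast_pow] at this
    exact ne_zero_pow two_ne_zero this
  have hq0 : q ≠ 0 := hq.ne_zero (pow_ne_zero 2 hn0)
  have hinv : q⁻¹ * q = 1 := inv_mul_cancel₀ hq0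
  obtain ⟨m, hm⟩ := Nat.exists_eq_add_of_le hi
  obtain ⟨x, hx, hxq, hxj⟩ := exists_eigenvalue hn0 h4 hq i j
  have hqnm : (q ^ n) ^ (2 * i) * (q ^ n) ^ m = 1 := by
    rw [← pow_add, ← hm, pow_right_comm, hq.pow_eq_one, one_pow]
  have hqm : q⁻¹ ^ (2 * i) * (q ^ 2)⁻¹ ^ m = q ^ (2 * i) := by
    calc _ = q⁻¹ ^ (2 * i) * (q⁻¹ ^ m) ^ 2 * (q⁻¹ * q) ^ (2 * i) := by
          rw [hinv, one_pow, mul_one, ← inv_pow, pow_right_comm]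
      _ = (q⁻¹ ^ (2 * i + m)) ^ 2 * q ^ (2 * i) := by ring
      _ = q ^ (2 * i) := by rw [← hm, hq.inv.pow_eq_one, one_pow, one_mul]
  refine ⟨x * (q ^ n) ^ (2 * i), ?_, ?_, ?_⟩
  · calc _ = x ^ n * (q ^ n ^ 2) ^ (2 * i) := by ring
      _ = 1 := by rw [hx, hq.pow_eq_one, one_pow, one_mul]
  · calc _ = x ^ 2 * (q ^ (2 * i)) ^ n * (q⁻¹ * q) ^ (2 * i * n) := by ring
      _ = 1 := by rw [hxq, hinv, one_pow, one_mul]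
  · rw [show n ^ 2 - 2 * i = m by omega]
    have hn2 : Even n := even_iff_two_dvd.2 (dvd_trans (by decide) h4)
    refine eIdem_apply _ hn2 hnk hq0 hj hx hxj ?_ ?_
    · rw [inducedRep_K, weightOp_monomial, pow_zero, mul_one, mul_assoc, hqnm, mul_one]
    · rw [inducedRep_Kh, weightOp_monomial, pow_zero, mul_one]
      congr 1
      calc _ = x * ((q ^ n) ^ (2 * i) * (q ^ n) ^ m) * (q⁻¹ ^ (2 * i) * (q ^ 2)⁻¹ ^ m) := by ring
        _ = x * q ^ (2 * i) := by rw [hqnm, hqm, mul_one]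

end Idempotent

end QFL

open QFL in
theorem statement6_general (k : Type) [Field k] (n : ℕ) (h4 : 4 ∣ n) (q : k)
    (hq : IsPrimitiveRoot q (n ^ 2)) :
    ∀ i j : ℕ, 1 ≤ i → i ≤ n ^ 2 / 2 → j ≤ 1 →
      E k n q ^ (n ^ 2 - 1) * alpha k n q i j * E k n q ^ (n ^ 2 - 2 * i) ≠ 0 := by
  intro i j hi hiN hj h
  have hn : 1 < n := by
    have hn0 : n ≠ 0 := by
      rintro rfl
      omega
    have := Nat.le_of_dvd (Nat.pos_of_ne_zero hn0) h4
    omega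
  have hN : 1 < n ^ 2 := Nat.one_lt_pow two_ne_zero hn
  obtain ⟨κ, hκ, hκl, hidem⟩ := exists_inducedRep_eIdem_apply hn h4 hq (i := i) (by omega) hj
  have hne := raise_pow_lower_pow_monomial_ne_zero hq hN (l := q⁻¹ ^ (2 * i)) (s := 2 * i - 1)
    (m := n ^ 2 - 2 * i) (by rw [Nat.sub_add_cancel (by omega)]) (by omega)
  rw [show 2 * i - 1 + (n ^ 2 - 2 * i) = n ^ 2 - 1 by omega] at hne
  apply hne
  have happly := LinearMap.congr_fun (congrArg (inducedRep hn hq hκ hκl) h) (monomial k (n ^ 2) 0 0)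
  rwa [alpha, map_mul, map_mul, map_mul, map_pow, map_pow, map_pow, inducedRep_E, inducedRep_F,
    map_zero, LinearMap.zero_apply, Module.End.mul_apply, Module.End.mul_apply,
    Module.End.mul_apply, raise_pow_monomial, zero_add, hidem] at happly

open QFL in
/-- Lemma 2.10: `E^(n²-1) α_{2i,j} E^(n²-2i) ≠ 0` in `ũ_q(sl₂)`. -/
theorem statement6 (k : Type) [Field k] [IsAlgClosed k] [CharZero k]
    (n : ℕ) (hn : 0 < n) (h4 : 4 ∣ n) (q : k) (hq : IsPrimitiveRoot q (n ^ 2)) :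
    ∀ i j : ℕ, 1 ≤ i → i ≤ n ^ 2 / 2 → j ≤ 1 →
      E k n q ^ (n ^ 2 - 1) * alpha k n q i j * E k n q ^ (n ^ 2 - 2 * i) ≠ 0 :=
  statement6_general k n h4 q hq
end
end
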